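/- arXiv:2109.13888 — 2 statements merged into one kernel-verified Lean document; each statement's English description precedes it below -/
import Mathlib

section
/- Let σ ∈ S₄ be the permutation with σ(1)=4, σ(2)=3, σ(3)=1, σ(4)=2 (complete notation [4312]). The set BL_σ ⊂ Lo¹₄ has exactly 16 connected components, and every connected component of BL_σ is contractible. -/
open Matrix

/-- The group `Lo¹_m` of real lower triangular `m × m` matrices with
all diagonal entries equal to `1`, viewed as a subset of the matrix space. -/
def Lo1 (m : ℕ) : Set (Matrix (Fin m) (Fin m) ℝ) :=
  {L | (∀ i, L i i = 1) ∧ ∀ i j : Fin m, i < j → L i j = 0}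

/-- The set of invertible real upper triangular `m × m` matrices. -/
def UpInv (m : ℕ) : Set (Matrix (Fin m) (Fin m) ℝ) :=
  {U | (∀ i j : Fin m, j < i → U i j = 0) ∧ IsUnit U.det}

/-- The permutation matrix of `σ`, with `(P_σ)_{i, σ(i)} = 1` and `0` otherwise. -/
def permMat (m : ℕ) (σ : Equiv.Perm (Fin m)) : Matrix (Fin m) (Fin m) ℝ :=
  fun i j => if σ i = j then 1 else 0

/-- The Bruhat cell `Bru_σ^GL = { U₀ P_σ U₁ : U₀, U₁ upper triangular invertible }`. -/
def Bru (m : ℕ) (σ : Equiv.Perm (Fin m)) : Set (Matrix (Fin m) (Fin m) ℝ) :=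
  {M | ∃ U₀ ∈ UpInv m, ∃ U₁ ∈ UpInv m, M = U₀ * permMat m σ * U₁}

/-- `BL_σ = Lo¹ ∩ Bru_σ^GL`. -/
def BL (m : ℕ) (σ : Equiv.Perm (Fin m)) : Set (Matrix (Fin m) (Fin m) ℝ) :=
  Lo1 m ∩ Bru m σ

/-- The permutation `[4312] ∈ S₄` (in `1`-indexed complete notation), i.e.
`σ(1) = 4, σ(2) = 3, σ(3) = 1, σ(4) = 2`, written `0`-indexed on `Fin 4`. -/
def σ4312 : Equiv.Perm (Fin 4) :=
  ⟨![3, 2, 0, 1], ![2, 3, 1, 0], by decide, by decide⟩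

lemma card_and_contr {X T : Type} [TopologicalSpace X] [TopologicalSpace T] [DiscreteTopology T]
    (f : X → T) (hf : Continuous f) (hs : Function.Surjective f)
    (hc : ∀ t, ContractibleSpace ↥(f ⁻¹' {t})) :
    Nat.card (ConnectedComponents X) = Nat.card T ∧
      ∀ x : X, ContractibleSpace ↥(connectedComponent x) := by
  have key : ∀ x, connectedComponent x = f ⁻¹' {f x} := by
    intro x
    apply Set.Subset.antisymm
    · intro y hy
      have h := (isPreconnected_connectedComponent (x := x)).image f hf.continuousOn
      exact h.subsingleton ⟨y, hy, rfl⟩ ⟨x, mem_connectedComponent, rfl⟩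
    · have := hc (f x)
      have h : IsPreconnected (f ⁻¹' {f x}) := by
        rw [isPreconnected_iff_preconnectedSpace]
        infer_instance
      exact h.subset_connectedComponent rfl
  refine ⟨?_, fun x => by rw [key x]; exact hc _⟩
  apply Nat.card_congr
  refine Equiv.ofBijective hf.connectedComponentsLift ⟨?_, ?_⟩
  · intro a b
    obtain ⟨a, rfl⟩ := ConnectedComponents.surjective_coe a
    obtain ⟨b, rfl⟩ := ConnectedComponents.surjective_coe b
    intro h
    simp only [Continuous.connectedComponentsLift_apply_coe] at h
    rw [ConnectedComponents.coe_eq_coe', key b]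
    exact h
  · intro t
    obtain ⟨x, hx⟩ := hs t
    exact ⟨x, by simpa using hx⟩

lemma contr_step {E : Type} [TopologicalSpace E] {A B : Set E} (hBA : B ⊆ A) (H : ℝ × E → E)
    (hH : Continuous H) (h0 : ∀ p, H (0, p) = p)
    (hA : ∀ t : ℝ, 0 ≤ t → t ≤ 1 → ∀ p ∈ A, H (t, p) ∈ A)
    (hB : ∀ t : ℝ, 0 ≤ t → t ≤ 1 → ∀ p ∈ B, H (t, p) ∈ B)
    (h1 : ∀ p ∈ A, H (1, p) ∈ B) (hc : ContractibleSpace ↥B) : ContractibleSpace ↥A := by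
  have e : ContinuousMap.HomotopyEquiv ↥A ↥B :=
    { toFun := ⟨fun p => ⟨H (1, p), h1 p p.2⟩, by fun_prop⟩
      invFun := ⟨fun p => ⟨p, hBA p.2⟩, by fun_prop⟩
      left_inv := by
        refine ContinuousMap.Homotopic.symm ⟨⟨⟨fun q => ⟨H (q.1, q.2), hA _ q.1.2.1 q.1.2.2 _ q.2.2⟩,
          by fun_prop⟩, ?_, ?_⟩⟩
        · intro p; ext; simp [h0]
        · intro p; ext; simp
      right_inv := by
        refine ContinuousMap.Homotopic.symm ⟨⟨⟨fun q => ⟨H (q.1, q.2), hB _ q.1.2.1 q.1.2.2 _ q.2.2⟩,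
          by fun_prop⟩, ?_, ?_⟩⟩
        · intro p; ext; simp [h0]
        · intro p; ext; simp }
  exact e.contractibleSpace

/-- The two model pieces. -/
def Piece : Bool → Set (ℝ × ℝ × ℝ)
  | true => {p | (0 < p.1 ∧ 0 < p.2.1) ∧ p.1 + p.2.1 < p.1 * p.2.1 * p.2.2}
  | false => {p | (p.1 < 0 ∨ p.2.1 < 0) ∧ p.1 + p.2.1 < p.1 * p.2.1 * p.2.2}

lemma inv_conv {x1 x2 a b : ℝ} (h1 : 0 < x1) (h2 : 0 < x2) (ha : 0 ≤ a) (hb : 0 ≤ b)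
    (hab : a + b = 1) : 1 / (a * x1 + b * x2) ≤ a * (1 / x1) + b * (1 / x2) := by
  have hp : 0 < a * x1 + b * x2 := by
    rcases ha.eq_or_lt with h | h
    · subst h
      have : b = 1 := by linarith
      subst this; linarith
    · positivity
  have hb' : b = 1 - a := by linarith
  rw [div_le_iff₀ hp]
  have : (a * (1 / x1) + b * (1 / x2)) * (a * x1 + b * x2) - 1
      = a * b * (x1 - x2) ^ 2 / (x1 * x2) := by
    field_simp
    subst hb'
    ring
  have h3 : 0 ≤ a * b * (x1 - x2) ^ 2 / (x1 * x2) := by positivity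
  linarith

lemma piece_true_contr : ContractibleSpace ↥(Piece true) := by
  have hE : Piece true = {p | (0 < p.1 ∧ 0 < p.2.1) ∧ 1 / p.1 + 1 / p.2.1 < p.2.2} := by
    ext ⟨x, y, z⟩
    simp only [Piece, Set.mem_ofPred_eq]
    refine and_congr_right fun ⟨hx, hy⟩ => ?_
    rw [div_add_div _ _ hx.ne' hy.ne', div_lt_iff₀ (mul_pos hx hy)]
    constructor <;> intro h <;> nlinarith
  rw [hE]
  apply Convex.contractibleSpace
  · rintro ⟨x1, y1, z1⟩ ⟨⟨hx1, hy1⟩, h1⟩ ⟨x2, y2, z2⟩ ⟨⟨hx2, hy2⟩, h2⟩ a b ha hb hab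
    have cx := inv_conv hx1 hx2 ha hb hab
    have cy := inv_conv hy1 hy2 ha hb hab
    simp only [Set.mem_ofPred_eq, Prod.smul_mk, Prod.mk_add_mk, smul_eq_mul] at *
    rcases ha.eq_or_lt with h | h
    · subst h
      have : b = 1 := by linarith
      subst this
      simp only [zero_mul, one_mul, zero_add]
      exact ⟨⟨hx2, hy2⟩, h2⟩
    · refine ⟨⟨by positivity, by positivity⟩, ?_⟩
      nlinarith [mul_lt_mul_of_pos_left h1 h, mul_le_mul_of_nonneg_left h2.le hb]
  · exact ⟨(1, 1, 3), by norm_num⟩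

lemma negz_contr : ContractibleSpace ↥({p : ℝ × ℝ × ℝ | (p.1 < 0 ∧ p.2.1 < 0) ∧ p.2.2 = 0}) := by
  have : {p : ℝ × ℝ × ℝ | (p.1 < 0 ∧ p.2.1 < 0) ∧ p.2.2 = 0}
      = Set.Iio 0 ×ˢ (Set.Iio 0 ×ˢ {0}) := by
    ext p; simp [and_assoc]
  rw [this]
  apply Convex.contractibleSpace
  · exact (convex_Iio 0).prod ((convex_Iio 0).prod (convex_singleton 0))
  · exact ⟨(-1, -1, 0), by simp⟩

lemma neg_contr : ContractibleSpace ↥({p : ℝ × ℝ × ℝ | (p.1 < 0 ∧ p.2.1 < 0) ∧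
    p.1 + p.2.1 < p.1 * p.2.1 * p.2.2}) := by
  refine contr_step (B := {p : ℝ × ℝ × ℝ | (p.1 < 0 ∧ p.2.1 < 0) ∧ p.2.2 = 0}) ?_
    (fun q => (q.2.1, q.2.2.1, (1 - q.1) * q.2.2.2)) (by fun_prop) ?_ ?_ ?_ ?_ negz_contr
  · rintro ⟨x, y, z⟩ ⟨⟨hx, hy⟩, hz⟩
    simp only [Set.mem_ofPred_eq] at *
    subst hz
    exact ⟨⟨hx, hy⟩, by linarith⟩
  · rintro ⟨x, y, z⟩; simp
  · rintro t h0 h1 ⟨x, y, z⟩ ⟨⟨hx, hy⟩, hz⟩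
    simp only [Set.mem_ofPred_eq] at *
    refine ⟨⟨hx, hy⟩, ?_⟩
    rcases h1.eq_or_lt with h | h
    · subst h; linarith
    · nlinarith [mul_lt_mul_of_pos_left hz (sub_pos.2 h)]
  · rintro t h0 h1 ⟨x, y, z⟩ ⟨⟨hx, hy⟩, hz⟩
    simp only [Set.mem_ofPred_eq] at *
    exact ⟨⟨hx, hy⟩, by simp [hz]⟩
  · rintro ⟨x, y, z⟩ ⟨⟨hx, hy⟩, hz⟩
    simp only [Set.mem_ofPred_eq] at *
    exact ⟨⟨hx, hy⟩, by simp⟩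

lemma flow_pos {x y z r m : ℝ} (hr : 0 ≤ r) (hm : m = 1 + r * max (-z) 0)
    (hxy : x < 0 ∨ y < 0) (h : x + y < x * y * z) :
    (x - r) / m + (y - r) / m < (x - r) / m * ((y - r) / m) * z := by
  rcases le_or_gt 0 z with hz | hz
  · have : m = 1 := by rw [hm, max_eq_right (by linarith)]; ring
    subst this
    simp only [div_one]
    have hs : x + y ≤ 0 := by
      by_contra hs
      push Not at hs
      have : x * y ≤ 0 := by
        rcases hxy with h' | h' <;> nlinarith
      nlinarith
    nlinarith [mul_nonneg hr hz, mul_nonneg (mul_nonneg hr hz) (neg_nonneg.2 hs), mul_nonneg (mul_nonneg hr hr) hz]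
  · have hm' : m = 1 - r * z := by rw [hm, max_eq_left (by linarith)]; ring
    have hmp : 0 < m := by nlinarith
    have : (x - r) / m * ((y - r) / m) * z - ((x - r) / m + (y - r) / m)
        = (x * y * z - x - y + 2 * r + r ^ 2 * (-z)) / m ^ 2 := by
      field_simp
      rw [hm']; ring
    have h2 : 0 < (x * y * z - x - y + 2 * r + r ^ 2 * (-z)) / m ^ 2 := by
      apply div_pos _ (by positivity)
      have : 0 ≤ r ^ 2 * (-z) := by apply mul_nonneg (by positivity); linarith
      linarith
    linarith

lemma piece_false_contr : ContractibleSpace ↥(Piece false) := by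
  have hm : ∀ t x y z : ℝ, 0 < 1 + |t| * (|x| + |y| + 1) * max (-z) 0 := by
    intros; positivity
  refine contr_step (B := {p : ℝ × ℝ × ℝ | (p.1 < 0 ∧ p.2.1 < 0) ∧
    p.1 + p.2.1 < p.1 * p.2.1 * p.2.2}) ?_
    (fun q => ((q.2.1 - |q.1| * (|q.2.1| + |q.2.2.1| + 1)) /
        (1 + |q.1| * (|q.2.1| + |q.2.2.1| + 1) * max (-q.2.2.2) 0),
      (q.2.2.1 - |q.1| * (|q.2.1| + |q.2.2.1| + 1)) /
        (1 + |q.1| * (|q.2.1| + |q.2.2.1| + 1) * max (-q.2.2.2) 0), q.2.2.2)) ?_ ?_ ?_ ?_ ?_ neg_contr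
  · rintro ⟨x, y, z⟩ ⟨⟨hx, hy⟩, hz⟩
    exact ⟨Or.inl hx, hz⟩
  · refine Continuous.prodMk (Continuous.div (by fun_prop) (by fun_prop) fun q => (hm _ _ _ _).ne') 
      (Continuous.prodMk (Continuous.div (by fun_prop) (by fun_prop) fun q => (hm _ _ _ _).ne') (by fun_prop))
  · rintro ⟨x, y, z⟩; simp
  · rintro t h0 h1 ⟨x, y, z⟩ ⟨hx, hz⟩
    have hr : 0 ≤ |t| * (|x| + |y| + 1) := by positivity
    refine ⟨?_, flow_pos hr rfl hx hz⟩
    rcases hx with hx | hx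
    · left
      exact div_neg_of_neg_of_pos (by simp only at hx ⊢; linarith) (hm _ _ _ _)
    · right
      exact div_neg_of_neg_of_pos (by simp only at hx ⊢; linarith) (hm _ _ _ _)
  · rintro t h0 h1 ⟨x, y, z⟩ ⟨⟨hx, hy⟩, hz⟩
    have hr : 0 ≤ |t| * (|x| + |y| + 1) := by positivity
    refine ⟨⟨?_, ?_⟩, flow_pos hr rfl (Or.inl hx) hz⟩
    · exact div_neg_of_neg_of_pos (by simp only at hx ⊢; linarith) (hm _ _ _ _)
    · exact div_neg_of_neg_of_pos (by simp only at hy ⊢; linarith) (hm _ _ _ _)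
  · rintro ⟨x, y, z⟩ ⟨hx, hz⟩
    have hr : 0 ≤ |(1:ℝ)| * (|x| + |y| + 1) := by positivity
    refine ⟨⟨?_, ?_⟩, flow_pos hr rfl hx hz⟩
    · refine div_neg_of_neg_of_pos ?_ (hm _ _ _ _)
      simp only [abs_one]
      linarith [le_abs_self x, abs_nonneg y]
    · refine div_neg_of_neg_of_pos ?_ (hm _ _ _ _)
      simp only [abs_one]
      linarith [le_abs_self y, abs_nonneg x]

lemma piece_contr (t : Bool) : ContractibleSpace ↥(Piece t) := by
  cases t
  · exact piece_false_contr
  · exact piece_true_contr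

/-- The relevant minor. -/
def dl (L : Matrix (Fin 4) (Fin 4) ℝ) : ℝ :=
  L 1 0 * L 2 1 * L 3 2 - L 1 0 * L 3 1 - L 2 0 * L 3 2

lemma upInv_diag {U : Matrix (Fin 4) (Fin 4) ℝ} (h : U ∈ UpInv 4) (i : Fin 4) : U i i ≠ 0 := by
  obtain ⟨h1, h2⟩ := h
  have h3 : U.det = ∏ i, U i i := Matrix.det_of_isUpperTriangular (fun i j hij => h1 i j hij)
  rw [h3, isUnit_iff_ne_zero, Finset.prod_ne_zero_iff] at h2
  exact h2 i (Finset.mem_univ _)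

lemma bl_conds {L : Matrix (Fin 4) (Fin 4) ℝ} (h : L ∈ BL 4 σ4312) :
    L 3 0 = 0 ∧ L 3 1 ≠ 0 ∧ L 2 0 ≠ 0 ∧ dl L ≠ 0 := by
  obtain ⟨⟨hd, hu⟩, U, hU, V, hV, hL⟩ := h
  have dU := upInv_diag hU
  have dV := upInv_diag hV
  have zU := hU.1
  have zV := hV.1
  have e : ∀ i j, L i j = U i 0 * V 3 j + U i 1 * V 2 j + U i 2 * V 0 j + U i 3 * V 1 j := by
    intro i j
    rw [hL]
    simp only [Matrix.mul_apply, Fin.sum_univ_four, permMat, σ4312]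
    simp [Fin.ext_iff]
    ring
  have u10 := zU 1 0 (by decide)
  have u20 := zU 2 0 (by decide)
  have u30 := zU 3 0 (by decide)
  have u21 := zU 2 1 (by decide)
  have u31 := zU 3 1 (by decide)
  have u32 := zU 3 2 (by decide)
  have v10 := zV 1 0 (by decide)
  have v20 := zV 2 0 (by decide)
  have v30 := zV 3 0 (by decide)
  have v21 := zV 2 1 (by decide)
  have v31 := zV 3 1 (by decide)
  have v32 := zV 3 2 (by decide)
  have a30 : L 3 0 = 0 := by rw [e]; simp [*]
  have a31 : L 3 1 = U 3 3 * V 1 1 := by rw [e]; simp [*]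
  have a20 : L 2 0 = U 2 2 * V 0 0 := by rw [e]; simp [*]
  refine ⟨a30, ?_, ?_, ?_⟩
  · rw [a31]; exact mul_ne_zero (dU 3) (dV 1)
  · rw [a20]; exact mul_ne_zero (dU 2) (dV 0)
  · have h11 : L 1 1 = 1 := hd 1
    have h22 : L 2 2 = 1 := hd 2
    have h12 : L 1 2 = 0 := hu 1 2 (by decide)
    have : dl L = L 1 0 * (L 2 1 * L 3 2 - L 2 2 * L 3 1) - L 1 1 * (L 2 0 * L 3 2 - L 2 2 * L 3 0)
        + L 1 2 * (L 2 0 * L 3 1 - L 2 1 * L 3 0) := by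
      rw [h11, h22, h12, a30]; unfold dl; ring
    have h2 : dl L = U 1 1 * U 2 2 * U 3 3 * V 0 0 * V 1 1 * V 2 2 := by
      rw [this]
      simp only [e, u10, u20, u30, u21, u31, u32, v10, v20, v30, v21, v31, v32]
      ring
    rw [h2]
    have := dU 1; have := dU 2; have := dU 3
    have := dV 0; have := dV 1; have := dV 2
    positivity

/-- The matrix with given coordinates. -/
def mk (a b c e f : ℝ) : Matrix (Fin 4) (Fin 4) ℝ :=
  !![1, 0, 0, 0; a, 1, 0, 0; b, c, 1, 0; 0, e, f, 1]

lemma upper_mem {U : Matrix (Fin 4) (Fin 4) ℝ} (h : ∀ i j : Fin 4, j < i → U i j = 0)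
    (hd : ∀ i, U i i ≠ 0) : U ∈ UpInv 4 := by
  refine ⟨h, ?_⟩
  rw [Matrix.det_of_isUpperTriangular (fun i j hij => h i j hij), isUnit_iff_ne_zero,
    Finset.prod_ne_zero_iff]
  exact fun i _ => hd i

lemma mk_mem {a b c e f : ℝ} (he : e ≠ 0) (hb : b ≠ 0) (hd : a * c * f - a * e - b * f ≠ 0) :
    mk a b c e f ∈ BL 4 σ4312 := by
  obtain ⟨d, hdd⟩ : ∃ d, d = a * c * f - a * e - b * f := ⟨_, rfl⟩
  rw [← hdd] at hd
  refine ⟨⟨?_, ?_⟩, 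
    !![-1/d, (c*f-e)/(b*e), 1, 0; 0, d/(b*e), a, 1; 0, 0, b, c; 0, 0, 0, e], ?_,
    !![1, 0, -((c*f-e)/(b*e)), (c*f-e)/(b*e) * (-1/d*(a*c-b)) - (-1/d);
       0, 1, f/e, -f/e * (-1/d*(a*c-b)) - (a/d);
       0, 0, 1, -(-1/d*(a*c-b)); 0, 0, 0, 1], ?_, ?_⟩
  · intro i; fin_cases i <;> simp [mk]
  · intro i j hij
    fin_cases i <;> fin_cases j <;> first | (exact absurd hij (by decide)) | simp [mk]
  · apply upper_mem
    · intro i j hij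
      fin_cases i <;> fin_cases j <;> first | (exact absurd hij (by decide)) | simp
    · clear hdd; intro i; fin_cases i <;> simp [*]
  · apply upper_mem
    · intro i j hij
      fin_cases i <;> fin_cases j <;> first | (exact absurd hij (by decide)) | simp
    · intro i; fin_cases i <;> simp
  · ext i j
    simp only [Matrix.mul_apply, Fin.sum_univ_four, permMat, σ4312]
    fin_cases i <;> fin_cases j <;> simp [Fin.ext_iff, mk] <;> field_simp <;>
      (try rw [hdd]) <;> ring

/-- Sign attached to a boolean. -/
def sg (t : Bool) : ℝ := if t then 1 else -1

lemma sg_mul (t : Bool) : sg t * sg t = 1 := by cases t <;> norm_num [sg]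
lemma sg_ne (t : Bool) : sg t ≠ 0 := by cases t <;> norm_num [sg]

/-- e coordinate etc. -/
def ce (L : Matrix (Fin 4) (Fin 4) ℝ) : ℝ := L 3 1
def cb (L : Matrix (Fin 4) (Fin 4) ℝ) : ℝ := L 2 0
def cx (L : Matrix (Fin 4) (Fin 4) ℝ) : ℝ := L 1 0 * L 3 1
def cy (L : Matrix (Fin 4) (Fin 4) ℝ) : ℝ := L 3 2 * L 2 0
noncomputable def cz (L : Matrix (Fin 4) (Fin 4) ℝ) : ℝ := L 2 1 / (L 3 1 * L 2 0)

lemma bl_eq_mk {L : Matrix (Fin 4) (Fin 4) ℝ} (h : L ∈ BL 4 σ4312) :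
    L = mk (L 1 0) (L 2 0) (L 2 1) (L 3 1) (L 3 2) := by
  have h0 := (bl_conds h).1
  obtain ⟨⟨hd, hu⟩, -⟩ := h
  ext i j
  fin_cases i <;> fin_cases j <;> simp [mk, hd, h0] <;> exact hu _ _ (by decide)

lemma dl_eq {L : Matrix (Fin 4) (Fin 4) ℝ} (h : L ∈ BL 4 σ4312) :
    dl L = cx L * cy L * cz L - cx L - cy L := by
  obtain ⟨-, h1, h2, -⟩ := bl_conds h
  unfold dl cx cy cz
  field_simp

open Classical in
/-- The classifying map. -/
noncomputable def cl (L : ↥(BL 4 σ4312)) : Bool × Bool × Bool × Bool :=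
  (decide (0 < ce L), decide (0 < cb L), decide (0 < dl L),
    decide (0 < dl L * cx L ∧ 0 < dl L * cy L))

lemma cont_decide {X : Type} [TopologicalSpace X] (p : X → Prop) [DecidablePred p]
    (h1 : IsOpen {x | p x}) (h2 : IsOpen {x | ¬ p x}) : Continuous fun x => decide (p x) := by
  rw [continuous_bool_rng true]
  have : (fun x => decide (p x)) ⁻¹' {true} = {x | p x} := by ext; simp
  rw [this]
  exact ⟨⟨h2⟩, h1⟩

lemma flag_not {x y z d : ℝ} (hd : d = x * y * z - x - y) (h : d ≠ 0) :
    ¬ (0 < d * x ∧ 0 < d * y) ↔ (d * x < 0 ∨ d * y < 0) := by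
  constructor
  · intro h1
    by_contra h2
    push Not at h2
    apply h1
    obtain ⟨ha, hb⟩ := h2
    rcases ha.eq_or_lt with h3 | h3
    · have hx : x = 0 := by simpa [h] using h3.symm
      subst hx
      have : y = - d := by linarith
      subst this
      have : 0 < d * d := mul_self_pos.2 h
      linarith
    · rcases hb.eq_or_lt with h4 | h4
      · have hx : y = 0 := by simpa [h] using h4.symm
        subst hx
        have : x = - d := by linarith
        subst this
        have : 0 < d * d := mul_self_pos.2 h
        linarith
      · exact ⟨h3, h4⟩
  · rintro (h1 | h1) ⟨h2, h3⟩ <;> linarith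

lemma ent_cont (i j : Fin 4) : Continuous fun L : ↥(BL 4 σ4312) => L.1 i j :=
  Continuous.matrix_elem continuous_subtype_val i j

lemma ce_cont : Continuous fun L : ↥(BL 4 σ4312) => ce L := ent_cont 3 1
lemma cb_cont : Continuous fun L : ↥(BL 4 σ4312) => cb L := ent_cont 2 0
lemma cx_cont : Continuous fun L : ↥(BL 4 σ4312) => cx L := (ent_cont 1 0).mul (ent_cont 3 1)
lemma cy_cont : Continuous fun L : ↥(BL 4 σ4312) => cy L := (ent_cont 3 2).mul (ent_cont 2 0)
lemma dl_cont : Continuous fun L : ↥(BL 4 σ4312) => dl L :=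
  ((((ent_cont 1 0).mul (ent_cont 2 1)).mul (ent_cont 3 2)).sub
    ((ent_cont 1 0).mul (ent_cont 3 1))).sub ((ent_cont 2 0).mul (ent_cont 3 2))

lemma cz_cont : Continuous fun L : ↥(BL 4 σ4312) => cz L := by
  refine Continuous.div (ent_cont 2 1) ((ent_cont 3 1).mul (ent_cont 2 0)) fun L => ?_
  obtain ⟨-, h1, h2, -⟩ := bl_conds L.2
  exact mul_ne_zero h1 h2

lemma cl_cont : Continuous cl := by
  have ece := ce_cont
  have ecb := cb_cont
  have ecx := cx_cont
  have ecy := cy_cont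
  have edl := dl_cont
  have aux : ∀ g : ↥(BL 4 σ4312) → ℝ, Continuous g → (∀ L, g L ≠ 0) → IsOpen {L | ¬ 0 < g L} := by
    intro g hg h0
    have : {L | ¬ 0 < g L} = {L | g L < 0} := by
      ext L
      simp only [Set.mem_ofPred_eq, not_lt]
      exact ⟨fun h => lt_of_le_of_ne h (h0 L), le_of_lt⟩
    rw [this]
    exact isOpen_lt hg continuous_const
  unfold cl
  refine Continuous.prodMk ?_ (Continuous.prodMk ?_ (Continuous.prodMk ?_ ?_))
  · exact cont_decide _ (isOpen_lt continuous_const ece) (aux _ ece fun L => (bl_conds L.2).2.1)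
  · exact cont_decide _ (isOpen_lt continuous_const ecb) (aux _ ecb fun L => (bl_conds L.2).2.2.1)
  · exact cont_decide _ (isOpen_lt continuous_const edl) (aux _ edl fun L => (bl_conds L.2).2.2.2)
  · apply cont_decide
    · exact (isOpen_lt continuous_const (edl.mul ecx)).inter (isOpen_lt continuous_const (edl.mul ecy))
    · simp only [fun L : ↥(BL 4 σ4312) => flag_not (dl_eq L.2) (bl_conds L.2).2.2.2]
      exact (isOpen_lt (edl.mul ecx) continuous_const).union (isOpen_lt (edl.mul ecy) continuous_const)

lemma sgn_iff (t : Bool) {x : ℝ} (hx : x ≠ 0) : 0 < x ↔ (t = true ↔ 0 < sg t * x) := by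
  rcases hx.lt_or_gt with h | h <;> cases t <;> simp [sg, h, h.le]

lemma dec_sgn (t : Bool) {x : ℝ} [Decidable (0 < x)] (hx : x ≠ 0) :
    decide (0 < x) = t ↔ 0 < sg t * x := by
  rcases hx.lt_or_gt with h | h <;> cases t <;> simp [sg, h, h.le]

lemma piece_iff (s t : Bool) {x y z d : ℝ} [Decidable (0 < d)] [Decidable (0 < d * x ∧ 0 < d * y)]
    (hd : d = x * y * z - x - y) (h : d ≠ 0) :
    (decide (0 < d) = s ∧ decide (0 < d * x ∧ 0 < d * y) = t) ↔
      (sg s * x, sg s * y, sg s * z) ∈ Piece t := by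
  rw [dec_sgn s h]
  have e : sg s * x * (sg s * y) * (sg s * z) - (sg s * x + sg s * y) = sg s * d := by
    rw [hd]
    linear_combination (sg s * x * y * z) * sg_mul s
  have e1 : sg s * x + sg s * y < sg s * x * (sg s * y) * (sg s * z) ↔ 0 < sg s * d := by
    rw [← e, sub_pos]
  have f1 : d * x = (sg s * d) * (sg s * x) := by linear_combination (- d * x) * sg_mul s
  have f2 : d * y = (sg s * d) * (sg s * y) := by linear_combination (- d * y) * sg_mul s
  cases t
  · rw [decide_eq_false_iff_not, flag_not hd h, f1, f2]
    simp only [Piece, Set.mem_ofPred_eq, e1]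
    rw [and_comm]
    refine and_congr_left fun hp => ?_
    simp only [mul_neg_iff, hp, hp.not_gt, true_and, false_and, or_false]
  · rw [decide_eq_true_iff, f1, f2]
    simp only [Piece, Set.mem_ofPred_eq, e1]
    rw [and_comm]
    refine and_congr_left fun hp => ?_
    rw [mul_pos_iff_of_pos_left hp, mul_pos_iff_of_pos_left hp]

lemma cl_iff (L : ↥(BL 4 σ4312)) (t1 t2 t3 t4 : Bool) : cl L = (t1, t2, t3, t4) ↔
    0 < sg t1 * ce L ∧ 0 < sg t2 * cb L ∧ (sg t3 * cx L, sg t3 * cy L, sg t3 * cz L) ∈ Piece t4 := by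
  obtain ⟨-, h1, h2, h3⟩ := bl_conds L.2
  unfold cl
  rw [Prod.mk.injEq, Prod.mk.injEq, Prod.mk.injEq, piece_iff t3 t4 (dl_eq L.2) h3,
    dec_sgn t1 (x := ce L) h1, dec_sgn t2 (x := cb L) h2]

/-- Coordinates of the fibre. -/
abbrev FibModel (t : Bool) := ↥(Set.Ioi (0:ℝ)) × ↥(Set.Ioi (0:ℝ)) × ↥(Piece t)

/-- The inverse coordinates as matrix. -/
noncomputable def inv0 (t1 t2 t3 : Bool) (e b x y z : ℝ) : Matrix (Fin 4) (Fin 4) ℝ :=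
  mk (sg t3 * x / (sg t1 * e)) (sg t2 * b) (sg t3 * z * (sg t1 * e * (sg t2 * b))) (sg t1 * e)
    (sg t3 * y / (sg t2 * b))

lemma piece_lt {t : Bool} {p : ℝ × ℝ × ℝ} (h : p ∈ Piece t) :
    p.1 + p.2.1 < p.1 * p.2.1 * p.2.2 := by
  cases t
  · exact h.2
  · exact h.2

lemma inv0_mem (t1 t2 t3 : Bool) {e b x y z : ℝ} (he : 0 < e) (hb : 0 < b)
    (h : x + y < x * y * z) : inv0 t1 t2 t3 e b x y z ∈ BL 4 σ4312 := by
  have h1 := sg_ne t1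
  have h2 := sg_ne t2
  have h3 := sg_ne t3
  apply mk_mem
  · positivity
  · positivity
  · have : sg t3 * x / (sg t1 * e) * (sg t3 * z * (sg t1 * e * (sg t2 * b))) * (sg t3 * y / (sg t2 * b))
      - sg t3 * x / (sg t1 * e) * (sg t1 * e) - sg t2 * b * (sg t3 * y / (sg t2 * b))
      = sg t3 * (x * y * z - x - y) := by
      field_simp
      linear_combination (x * y * z) * sg_mul t3
    rw [this]
    apply mul_ne_zero h3
    linarith

/-- Inverse map to BL. -/
noncomputable def invM (t1 t2 t3 t4 : Bool) (q : FibModel t4) : ↥(BL 4 σ4312) :=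
  ⟨inv0 t1 t2 t3 q.1 q.2.1 q.2.2.1.1 q.2.2.1.2.1 q.2.2.1.2.2,
    inv0_mem t1 t2 t3 q.1.2 q.2.1.2 (piece_lt q.2.2.2)⟩

lemma inv0_coord (t1 t2 t3 : Bool) {e b x y z : ℝ} (he : 0 < e) (hb : 0 < b) :
    sg t1 * ce (inv0 t1 t2 t3 e b x y z) = e ∧ sg t2 * cb (inv0 t1 t2 t3 e b x y z) = b ∧
    sg t3 * cx (inv0 t1 t2 t3 e b x y z) = x ∧ sg t3 * cy (inv0 t1 t2 t3 e b x y z) = y ∧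
    sg t3 * cz (inv0 t1 t2 t3 e b x y z) = z := by
  have h1 := sg_ne t1
  have h2 := sg_ne t2
  refine ⟨?_, ?_, ?_, ?_, ?_⟩ <;> simp [ce, cb, cx, cy, cz, inv0, mk]
  · linear_combination e * sg_mul t1
  · linear_combination b * sg_mul t2
  · field_simp
    linear_combination x * sg_mul t3
  · field_simp
    linear_combination y * sg_mul t3
  · field_simp
    linear_combination z * sg_mul t3

lemma cl_invM (t1 t2 t3 t4 : Bool) (q : FibModel t4) : cl (invM t1 t2 t3 t4 q) = (t1, t2, t3, t4) := by
  rw [cl_iff]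
  obtain ⟨a1, a2, a3, a4, a5⟩ := inv0_coord t1 t2 t3 (x := q.2.2.1.1) (y := q.2.2.1.2.1)
    (z := q.2.2.1.2.2) q.1.2 q.2.1.2
  simp only [invM, a1, a2, a3, a4, a5]
  exact ⟨q.1.2, q.2.1.2, q.2.2.2⟩

lemma inv0_left (t1 t2 t3 : Bool) {L : Matrix (Fin 4) (Fin 4) ℝ} (h : L ∈ BL 4 σ4312) :
    inv0 t1 t2 t3 (sg t1 * ce L) (sg t2 * cb L) (sg t3 * cx L) (sg t3 * cy L) (sg t3 * cz L) = L := by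
  obtain ⟨-, h1, h2, -⟩ := bl_conds h
  have k : ∀ t (x : ℝ), sg t * (sg t * x) = x := fun t x => by
    linear_combination x * sg_mul t
  conv_rhs => rw [bl_eq_mk h]
  unfold inv0
  simp only [k]
  unfold ce cb cx cy cz
  congr 1 <;> field_simp

/-- The fibre homeomorphism. -/
noncomputable def fibH (t1 t2 t3 t4 : Bool) : ↥(cl ⁻¹' {(t1, t2, t3, t4)}) ≃ₜ FibModel t4 where
  toFun L := ⟨⟨sg t1 * ce L.1, ((cl_iff _ _ _ _ _).1 L.2).1⟩,
    ⟨sg t2 * cb L.1, ((cl_iff _ _ _ _ _).1 L.2).2.1⟩,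
    ⟨(sg t3 * cx L.1, sg t3 * cy L.1, sg t3 * cz L.1), ((cl_iff _ _ _ _ _).1 L.2).2.2⟩⟩
  invFun q := ⟨invM t1 t2 t3 t4 q, cl_invM t1 t2 t3 t4 q⟩
  left_inv L := by
    apply Subtype.ext
    apply Subtype.ext
    exact inv0_left t1 t2 t3 L.1.2
  right_inv q := by
    obtain ⟨a1, a2, a3, a4, a5⟩ := inv0_coord t1 t2 t3 (x := q.2.2.1.1) (y := q.2.2.1.2.1)
      (z := q.2.2.1.2.2) q.1.2 q.2.1.2
    simp only [invM, a1, a2, a3, a4, a5]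
  continuous_toFun := by
    have h1 := ce_cont.comp (continuous_subtype_val (p := (· ∈ cl ⁻¹' {(t1, t2, t3, t4)})))
    have h2 := cb_cont.comp (continuous_subtype_val (p := (· ∈ cl ⁻¹' {(t1, t2, t3, t4)})))
    have h3 := cx_cont.comp (continuous_subtype_val (p := (· ∈ cl ⁻¹' {(t1, t2, t3, t4)})))
    have h4 := cy_cont.comp (continuous_subtype_val (p := (· ∈ cl ⁻¹' {(t1, t2, t3, t4)})))
    have h5 := cz_cont.comp (continuous_subtype_val (p := (· ∈ cl ⁻¹' {(t1, t2, t3, t4)})))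
    exact ((continuous_const.mul h1).subtype_mk _).prodMk
      (((continuous_const.mul h2).subtype_mk _).prodMk
        (((continuous_const.mul h3).prodMk ((continuous_const.mul h4).prodMk
          (continuous_const.mul h5))).subtype_mk _))
  continuous_invFun := by
    refine Continuous.subtype_mk (Continuous.subtype_mk ?_ _) _
    have h1 : ∀ q : FibModel t4, sg t1 * (q.1 : ℝ) ≠ 0 := fun q => mul_ne_zero (sg_ne _) (ne_of_gt q.1.2)
    have h2 : ∀ q : FibModel t4, sg t2 * (q.2.1 : ℝ) ≠ 0 := fun q => mul_ne_zero (sg_ne _) (ne_of_gt q.2.1.2)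
    have c1 : Continuous fun q : FibModel t4 => sg t3 * q.2.2.1.1 / (sg t1 * (q.1 : ℝ)) :=
      Continuous.div (by fun_prop) (by fun_prop) h1
    have c2 : Continuous fun q : FibModel t4 => sg t3 * q.2.2.1.2.1 / (sg t2 * (q.2.1 : ℝ)) :=
      Continuous.div (by fun_prop) (by fun_prop) h2
    refine continuous_matrix fun i j => ?_
    fin_cases i <;> fin_cases j <;> simp [inv0, mk] <;> fun_prop

/-- `BL_{[4312]} ⊂ Lo¹₄` has exactly 16 connected components,
all of which are contractible. -/
theorem stmt2 :
    Nat.card (ConnectedComponents ↥(BL 4 σ4312)) = 16 ∧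
      ∀ L : ↥(BL 4 σ4312), ContractibleSpace ↥(connectedComponent L) := by
  have hI : ContractibleSpace ↥(Set.Ioi (0:ℝ)) :=
    (convex_Ioi (0:ℝ)).contractibleSpace ⟨1, by simp⟩
  have hM : ∀ t, ContractibleSpace (FibModel t) := fun t => by
    have := piece_contr t
    infer_instance
  have h := card_and_contr cl cl_cont ?_ ?_
  · refine ⟨?_, h.2⟩
    rw [h.1]
    simp
  · rintro ⟨t1, t2, t3, t4⟩
    have := hM t4
    obtain ⟨q⟩ : Nonempty (FibModel t4) := inferInstance
    exact ⟨_, cl_invM t1 t2 t3 t4 q⟩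
  · rintro ⟨t1, t2, t3, t4⟩
    have := hM t4
    exact (fibH t1 t2 t3 t4).contractibleSpace
end

section
/- For every permutation σ ∈ S₄, every connected component of the set BL_σ ⊂ Lo¹₄ is contractible. -/
open Matrix

/-- A space is `Good` when its identity map is homotopic to a locally constant map; equivalently, it
is homotopy equivalent to a discrete space. -/
def Good (X : Type) [TopologicalSpace X] : Prop :=
  ∃ r : C(X, X), IsLocallyConstant r ∧ r.Homotopic (ContinuousMap.id X)

section GoodTheory

variable {X Y : Type} [TopologicalSpace X] [TopologicalSpace Y]

/-- Connected components of good spaces are contractible. -/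
theorem Good.contractible_component (h : Good X) (x : X) :
    ContractibleSpace ↥(connectedComponent x) := by
  obtain ⟨r, hr, ⟨H⟩⟩ := h
  have key : ∀ y ∈ connectedComponent x, ∀ t, H (t, y) ∈ connectedComponent x := by
    intro y hy t
    have hc : IsPreconnected (Set.range fun s => H (s, y)) :=
      isPreconnected_range (by fun_prop)
    have h1 : y ∈ Set.range fun s => H (s, y) := ⟨1, by simp⟩
    have := hc.subset_connectedComponent h1
    rw [connectedComponent_eq hy]
    exact this ⟨t, rfl⟩
  have hx : r x ∈ connectedComponent x := by
    have := key x mem_connectedComponent 0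
    simpa using this
  have hconst : ∀ y ∈ connectedComponent x, r y = r x := fun y hy =>
    hr.apply_eq_of_isPreconnected isPreconnected_connectedComponent hy mem_connectedComponent
  rw [contractible_iff_id_nullhomotopic]
  refine ⟨⟨r x, hx⟩, ContinuousMap.Homotopic.symm ⟨?_⟩⟩
  refine ⟨⟨fun p => ⟨H (p.1, p.2.1), key _ p.2.2 _⟩, by fun_prop⟩, ?_, ?_⟩
  · intro y
    apply Subtype.ext
    simpa using hconst y.1 y.2
  · intro y
    apply Subtype.ext
    simp

theorem Good.dominated (h : Good Y) (f : C(X, Y)) (g : C(Y, X))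
    (hgf : (g.comp f).Homotopic (ContinuousMap.id X)) : Good X := by
  obtain ⟨r, hr, hH⟩ := h
  refine ⟨(g.comp r).comp f, (hr.comp g).comp_continuous f.continuous, ?_⟩
  have h1 : ((g.comp r).comp f).Homotopic ((g.comp (ContinuousMap.id Y)).comp f) :=
    ((ContinuousMap.Homotopic.refl g).comp hH).comp (ContinuousMap.Homotopic.refl f)
  exact h1.trans hgf

theorem Good.prod (h : Good X) (h' : Good Y) : Good (X × Y) := by
  obtain ⟨r, hr, hH⟩ := h
  obtain ⟨r', hr', hH'⟩ := h'
  refine ⟨r.prodMap r', ?_, hH.prodMap hH'⟩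
  have := (hr.comp_continuous continuous_fst).prodMk (hr'.comp_continuous
    (continuous_snd : Continuous (Prod.snd : X × Y → Y)))
  exact this

theorem Good.sum (h : Good X) (h' : Good Y) : Good (X ⊕ Y) := by
  obtain ⟨r, hr, ⟨H⟩⟩ := h
  obtain ⟨r', hr', ⟨H'⟩⟩ := h'
  refine ⟨⟨Sum.map r r', by fun_prop⟩, ?_, ⟨?_⟩⟩
  · intro s
    rw [isOpen_sum_iff]
    exact ⟨hr (Sum.inl ⁻¹' s), hr' (Sum.inr ⁻¹' s)⟩
  · refine ⟨⟨fun p => Sum.map H H' (Homeomorph.prodSumDistrib p), by fun_prop⟩, ?_, ?_⟩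
    · rintro (y | y)
      · exact congrArg Sum.inl (H.apply_zero y)
      · exact congrArg Sum.inr (H'.apply_zero y)
    · rintro (y | y)
      · exact congrArg Sum.inl (H.apply_one y)
      · exact congrArg Sum.inr (H'.apply_one y)

theorem Good.of_contractible [ContractibleSpace X] : Good X := by
  obtain ⟨y, hy⟩ := id_nullhomotopic X
  exact ⟨ContinuousMap.const X y, IsLocallyConstant.const y, hy.symm⟩

theorem Good.of_convex {E : Type} [AddCommGroup E] [Module ℝ E] [TopologicalSpace E]
    [ContinuousAdd E] [ContinuousSMul ℝ E] {S : Set E} (hS : Convex ℝ S) : Good ↥S := by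
  rcases S.eq_empty_or_nonempty with rfl | hne
  · exact ⟨ContinuousMap.id _, fun s => by
      have : (ContinuousMap.id (↥(∅ : Set E))) ⁻¹' s = ∅ := Set.eq_empty_of_isEmpty _
      rw [this]; exact isOpen_empty, ContinuousMap.Homotopic.refl _⟩
  · have := hS.contractibleSpace hne
    exact Good.of_contractible

theorem Good.union {A B : Set X} (hA : IsOpen A) (hB : IsOpen B) (hd : ∀ x ∈ A, x ∉ B)
    (gA : Good ↥A) (gB : Good ↥B) : Good ↥(A ∪ B) := by
  let g : ↥A ⊕ ↥B → ↥(A ∪ B) := Sum.elim (Set.inclusion Set.subset_union_left)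
    (Set.inclusion Set.subset_union_right)
  have hg : IsHomeomorph g := by
    refine ⟨?_, ?_, ?_, ?_⟩
    · exact (continuous_inclusion _).sumElim (continuous_inclusion _)
    · exact IsOpenMap.sumElim (hA.isOpenMap_inclusion _) (hB.isOpenMap_inclusion _)
    · rintro (⟨x, hx⟩ | ⟨x, hx⟩) (⟨y, hy⟩ | ⟨y, hy⟩) hxy <;> simp [g, Set.inclusion] at hxy ⊢
      · exact hxy
      · subst hxy; exact hd _ hx hy
      · subst hxy; exact hd _ hy hx
      · exact hxy
    · rintro ⟨x, hx | hx⟩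
      · exact ⟨Sum.inl ⟨x, hx⟩, rfl⟩
      · exact ⟨Sum.inr ⟨x, hx⟩, rfl⟩
  let e := hg.homeomorph g
  refine (gA.sum gB).dominated ⟨e.symm, e.symm.continuous⟩ ⟨e, e.continuous⟩ ?_
  have : (ContinuousMap.comp ⟨e, e.continuous⟩ ⟨e.symm, e.symm.continuous⟩) =
    ContinuousMap.id ↥(A ∪ B) := by ext x; simp
  rw [this]

theorem Good.split {S A B : Set X} (gA : Good ↥A) (gB : Good ↥B) (hA : IsOpen A) (hB : IsOpen B)
    (hd : ∀ x ∈ A, x ∉ B) (hS : ∀ x, x ∈ S ↔ x ∈ A ∨ x ∈ B) : Good ↥S := by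
  have : S = A ∪ B := by ext x; exact hS x
  rw [this]
  exact gA.union hA hB hd gB

theorem Good.of_leftInv {S : Set X} {T : Set Y} (hT : Good ↥T) (f : X → Y) (g : Y → X)
    (hf : ContinuousOn f S) (hg : ContinuousOn g T) (hfS : ∀ x ∈ S, f x ∈ T)
    (hgT : ∀ y ∈ T, g y ∈ S) (hgf : ∀ x ∈ S, g (f x) = x) : Good ↥S := by
  refine hT.dominated ⟨Set.MapsTo.restrict f S T hfS, hf.mapsToRestrict hfS⟩
    ⟨Set.MapsTo.restrict g T S hgT, hg.mapsToRestrict hgT⟩ ?_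
  have : (ContinuousMap.comp ⟨Set.MapsTo.restrict g T S hgT, hg.mapsToRestrict hgT⟩
      ⟨Set.MapsTo.restrict f S T hfS, hf.mapsToRestrict hfS⟩) = ContinuousMap.id ↥S := by
    ext x
    exact hgf x.1 x.2
  rw [this]

theorem Good.setProd {S : Set X} {T : Set Y} (hS : Good ↥S) (hT : Good ↥T) : Good ↥(S ×ˢ T) := by
  refine (hS.prod hT).dominated ⟨fun p => (⟨p.1.1, p.2.1⟩, ⟨p.1.2, p.2.2⟩), by fun_prop⟩
    ⟨fun p => ⟨(p.1.1, p.2.1), p.1.2, p.2.2⟩, by fun_prop⟩ ?_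
  exact ContinuousMap.Homotopic.refl _

/-- Elimination of one real variable with open convex nonempty fibres. -/
theorem Good.elim {E : Type} [PseudoEMetricSpace E] {B : Set E} {S : Set (E × ℝ)}
    (gB : Good ↥B) (hS : IsOpen S) (hSB : ∀ p ∈ S, p.1 ∈ B) (hne : ∀ b ∈ B, ∃ t, (b, t) ∈ S)
    (hconv : ∀ b, Convex ℝ {t : ℝ | (b, t) ∈ S}) : Good ↥S := by
  obtain ⟨s, hs⟩ := exists_continuous_forall_mem_convex_of_local_const (X := ↥B)
    (t := fun b => {t : ℝ | (b.1, t) ∈ S}) (fun b => hconv b.1) (by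
      intro b
      obtain ⟨t, ht⟩ := hne b.1 b.2
      refine ⟨t, ?_⟩
      have hc : Continuous fun y : ↥B => (y.1, t) := by fun_prop
      exact (hS.preimage hc).mem_nhds ht)
  have hmem : ∀ q : unitInterval × ↥S, (q.2.1.1, (1 - (q.1 : ℝ)) * s ⟨q.2.1.1, hSB _ q.2.2⟩ +
      (q.1 : ℝ) * q.2.1.2) ∈ S := by
    intro q
    exact hconv q.2.1.1 (hs ⟨q.2.1.1, hSB _ q.2.2⟩) (show (q.2.1.1, q.2.1.2) ∈ S from q.2.2)
      (by linarith [q.1.2.2]) q.1.2.1 (by ring)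
  refine gB.dominated ⟨fun p => ⟨p.1.1, hSB _ p.2⟩, by fun_prop⟩
    ⟨fun b => ⟨(b.1, s b), hs b⟩, by fun_prop⟩ ⟨?_⟩
  refine ⟨⟨fun q => ⟨_, hmem q⟩, by fun_prop⟩, ?_, ?_⟩
  · intro p
    apply Subtype.ext
    simp
  · intro p
    apply Subtype.ext
    simp

/-- Splitting along the sign of a nonvanishing affine function and eliminating the variable. -/
theorem Good.affine {E : Type} [PseudoEMetricSpace E] {α β : E → ℝ} (hα : Continuous α)
    (hβ : Continuous β) (g1 : Good ↥{b | α b ≠ 0 ∨ 0 < β b}) (g2 : Good ↥{b | α b ≠ 0 ∨ β b < 0}) :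
    Good ↥{p : E × ℝ | α p.1 * p.2 + β p.1 ≠ 0} := by
  refine Good.split (A := {p : E × ℝ | 0 < α p.1 * p.2 + β p.1})
    (B := {p : E × ℝ | α p.1 * p.2 + β p.1 < 0}) ?_ ?_
    (isOpen_lt (by fun_prop) (by fun_prop)) (isOpen_lt (by fun_prop) (by fun_prop))
    (fun x hx hx' => lt_asymm (Set.mem_ofPred.1 hx) hx') ?_
  · refine g1.elim (isOpen_lt (by fun_prop) (by fun_prop)) ?_ ?_ ?_
    · rintro ⟨b, t⟩ h
      by_cases h0 : α b = 0
      · right; simpa [h0] using h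
      · exact Or.inl h0
    · intro b hb
      by_cases h0 : α b = 0
      · exact ⟨0, by simpa [h0] using hb⟩
      · refine ⟨(1 - β b) / α b, ?_⟩
        simp only [Set.mem_ofPred_eq]
        rw [mul_div_cancel₀ _ h0]; norm_num
    · intro b x hx y hy u v hu hv huv
      simp only [Set.mem_ofPred_eq, smul_eq_mul] at *
      obtain rfl : v = 1 - u := by linarith
      have : α b * (u * x + (1 - u) * y) + β b =
        u * (α b * x + β b) + (1 - u) * (α b * y + β b) := by ring
      rw [this]
      rcases hu.eq_or_lt with rfl | hu
      · simpa using hy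
      · have := mul_pos hu hx
        have := mul_nonneg hv hy.le
        linarith
  · refine g2.elim (isOpen_lt (by fun_prop) (by fun_prop)) ?_ ?_ ?_
    · rintro ⟨b, t⟩ h
      by_cases h0 : α b = 0
      · right; simpa [h0] using h
      · exact Or.inl h0
    · intro b hb
      by_cases h0 : α b = 0
      · exact ⟨0, by simpa [h0] using hb⟩
      · refine ⟨(-1 - β b) / α b, ?_⟩
        simp only [Set.mem_ofPred_eq]
        rw [mul_div_cancel₀ _ h0]; norm_num
    · intro b x hx y hy u v hu hv huv
      simp only [Set.mem_ofPred_eq, smul_eq_mul] at *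
      obtain rfl : v = 1 - u := by linarith
      have : -(α b * (u * x + (1 - u) * y) + β b) =
        u * (-(α b * x + β b)) + (1 - u) * (-(α b * y + β b)) := by ring
      have h2 : 0 < -(α b * (u * x + (1 - u) * y) + β b) := by
        rw [this]
        rcases hu.eq_or_lt with rfl | hu
        · linarith
        · have := mul_pos hu (neg_pos.2 hx)
          have := mul_nonneg hv (neg_pos.2 hy).le
          linarith
      linarith
  · intro p
    constructor
    · intro h
      rcases lt_or_gt_of_ne h with h | h
      · exact Or.inr h
      · exact Or.inl h
    · rintro (h | h)
      · exact ne_of_gt h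
      · exact ne_of_lt h

end GoodTheory

section Models

theorem open_and {E : Type} [TopologicalSpace E] {p q : E → Prop} (hp : IsOpen {x | p x})
    (hq : IsOpen {x | q x}) : IsOpen {x | p x ∧ q x} := hp.inter hq

theorem open_or {E : Type} [TopologicalSpace E] {p q : E → Prop} (hp : IsOpen {x | p x})
    (hq : IsOpen {x | q x}) : IsOpen {x | p x ∨ q x} := hp.union hq

theorem Good.congr {E : Type} [TopologicalSpace E] {S T : Set E} (h : Good ↥T)
    (hST : ∀ x, x ∈ S ↔ x ∈ T) : Good ↥S := by
  obtain rfl : S = T := Set.ext hST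
  exact h

/-- A version of `Good.elim` where convexity is order-connectedness. -/
theorem Good.elim' {E : Type} [PseudoEMetricSpace E] {B : Set E} {S : Set (E × ℝ)}
    (gB : Good ↥B) (hS : IsOpen S) (hSB : ∀ b t, (b, t) ∈ S → b ∈ B)
    (hne : ∀ b ∈ B, ∃ t, (b, t) ∈ S)
    (hconv : ∀ b x y t, (b, x) ∈ S → (b, y) ∈ S → x ≤ t → t ≤ y → (b, t) ∈ S) : Good ↥S := by
  refine gB.elim hS (fun p hp => hSB p.1 p.2 hp) hne (fun b => ?_)
  refine Set.OrdConnected.convex ⟨?_⟩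
  intro x hx y hy t ht
  exact hconv b x y t hx hy ht.1 ht.2

theorem good_univ {E : Type} [AddCommGroup E] [Module ℝ E] [TopologicalSpace E]
    [ContinuousAdd E] [ContinuousSMul ℝ E] : Good ↥(Set.univ : Set E) :=
  Good.of_convex convex_univ

theorem good_pos : Good ↥{x : ℝ | 0 < x} := Good.of_convex (convex_Ioi 0)

theorem good_neg : Good ↥{x : ℝ | x < 0} := Good.of_convex (convex_Iio 0)

/-- The nonzero reals. -/
def Rs : Set ℝ := {x | x ≠ 0}

theorem good_Rs : Good ↥Rs := by
  refine Good.split good_pos good_neg (isOpen_lt (by fun_prop) (by fun_prop))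
    (isOpen_lt (by fun_prop) (by fun_prop)) (fun x hx hx' => ?_) (fun x => ?_)
  · exact lt_asymm (Set.mem_ofPred.1 hx) hx'
  · exact ne_comm.trans lt_or_lt_iff_ne.symm

/-- The complement of the hyperbola `x y = 1`. -/
def HH : Set (ℝ × ℝ) := {p | p.1 * p.2 + -1 ≠ 0}

theorem good_HH : Good ↥HH := by
  refine Good.affine (E := ℝ) (α := fun x => x) (β := fun _ => -1) (by fun_prop) (by fun_prop) ?_ ?_
  · refine good_Rs.congr fun x => ?_
    have : ¬ (1 : ℝ) < 0 := by norm_num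
    simp [Rs, this]
  · refine (good_univ (E := ℝ)).congr fun x => ?_
    simp

/-- The base set appearing in the first half of `AA`. -/
theorem good_AA_base : Good ↥{p : ℝ × ℝ | 1 - p.1 * p.2 ≠ 0 ∨ 0 < p.1} := by
  refine Good.split (A := {p : ℝ × ℝ | p.1 < 0 ∧ 1 < p.1 * p.2})
    (B := {p : ℝ × ℝ | 0 < p.1 ∨ p.1 * p.2 < 1}) ?_ ?_
    (open_and (isOpen_lt (by fun_prop) (by fun_prop)) (isOpen_lt (by fun_prop) (by fun_prop)))
    (open_or (isOpen_lt (by fun_prop) (by fun_prop)) (isOpen_lt (by fun_prop) (by fun_prop)))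
    ?_ ?_
  · refine good_neg.elim'
      (open_and (isOpen_lt (by fun_prop) (by fun_prop)) (isOpen_lt (by fun_prop) (by fun_prop)))
      ?_ ?_ ?_
    · intro b t h
      exact h.1
    · intro b hb
      refine ⟨2 / b, hb, ?_⟩
      have : b ≠ 0 := ne_of_lt hb
      simp only
      field_simp
      norm_num
    · rintro b x y t ⟨h1, h2⟩ ⟨h3, h4⟩ h5 h6
      refine ⟨h1, ?_⟩
      simp only at *
      nlinarith
  · refine (good_univ (E := ℝ)).elim'
      (open_or (isOpen_lt (by fun_prop) (by fun_prop)) (isOpen_lt (by fun_prop) (by fun_prop)))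
      ?_ ?_ ?_
    · intro b t h
      trivial
    · intro b hb
      exact ⟨0, Or.inr (by simp)⟩
    · intro b x y t h1 h2 h5 h6
      rcases lt_or_ge 0 b with hb | hb
      · exact Or.inl hb
      · rcases h1 with h1 | h1
        · exact Or.inl h1
        · refine Or.inr ?_
          simp only at *
          nlinarith
  · rintro ⟨c, b⟩ ⟨h1, h2⟩ (h3 | h3) <;> simp only at * <;> linarith
  · rintro ⟨c, b⟩
    simp only [Set.mem_ofPred_eq]
    constructor
    · rintro (h | h)
      · rcases lt_or_gt_of_ne h with h | h
        · rcases lt_trichotomy c 0 with hc | rfl | hc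
          · exact Or.inl ⟨hc, by linarith⟩
          · norm_num at h
          · exact Or.inr (Or.inl hc)
        · exact Or.inr (Or.inr (by linarith))
      · exact Or.inr (Or.inl h)
    · rintro (⟨h1, h2⟩ | h | h)
      · exact Or.inl (by linarith)
      · exact Or.inr h
      · exact Or.inl (by linarith)

/-- The three-dimensional model, with coordinates `((c, b), a)`. -/
def AA : Set ((ℝ × ℝ) × ℝ) := {p | (1 - p.1.1 * p.1.2) * p.2 + p.1.1 ≠ 0}

theorem good_AA : Good ↥AA := by
  refine Good.affine (E := ℝ × ℝ) (α := fun x => 1 - x.1 * x.2) (β := fun x => x.1)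
    (by fun_prop) (by fun_prop) good_AA_base ?_
  refine good_AA_base.of_leftInv (fun p => (-p.1, -p.2)) (fun p => (-p.1, -p.2))
    (by fun_prop) (by fun_prop) ?_ ?_ ?_
  · rintro ⟨c, b⟩ h
    simpa using h
  · rintro ⟨c, b⟩ h
    simpa using h
  · rintro ⟨c, b⟩ h
    simp

theorem good_ZZ_base1a : Good ↥{p : (ℝ × ℝ) × ℝ | 0 < p.2 * p.1.1 ∧ 1 < p.1.1 * p.1.2} := by
  have g1 : Good ↥{p : ℝ × ℝ | 1 < p.1 * p.2} := by
    refine good_Rs.elim' (isOpen_lt (by fun_prop) (by fun_prop)) ?_ ?_ ?_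
    · rintro b t h rfl
      norm_num at h
    · intro b hb
      refine ⟨2 / b, ?_⟩
      have : b ≠ 0 := hb
      simp only [Set.mem_ofPred_eq]
      field_simp
      norm_num
    · intro b x y t h1 h2 h5 h6
      simp only [Set.mem_ofPred_eq] at *
      rcases le_total 0 b with hb | hb <;> nlinarith
  refine g1.elim'
    (open_and (isOpen_lt (by fun_prop) (by fun_prop)) (isOpen_lt (by fun_prop) (by fun_prop)))
    ?_ ?_ ?_
  · intro b t h
    exact h.2
  · rintro ⟨c, d⟩ hb
    have h : 1 < c * d := hb
    have hc : c ≠ 0 := by rintro rfl; norm_num at h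
    exact ⟨c, mul_self_pos.2 hc, h⟩
  · rintro ⟨c, d⟩ x y t ⟨h1, h2⟩ ⟨h3, h4⟩ h5 h6
    refine ⟨?_, h2⟩
    simp only at *
    rcases le_total 0 c with hb | hb <;> nlinarith

theorem good_ZZ_base1b : Good ↥{p : (ℝ × ℝ) × ℝ | p.2 * p.1.1 < 0 ∨ p.1.1 * p.1.2 < 1} := by
  refine (good_univ (E := ℝ × ℝ)).elim'
    (open_or (isOpen_lt (by fun_prop) (by fun_prop)) (isOpen_lt (by fun_prop) (by fun_prop)))
    ?_ ?_ ?_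
  · intro b t h
    trivial
  · rintro ⟨c, d⟩ -
    by_cases hc : c = 0
    · exact ⟨0, Or.inr (by simp [hc])⟩
    · refine ⟨-c, Or.inl ?_⟩
      have : 0 < c * c := mul_self_pos.2 hc
      simp only
      linarith
  · rintro ⟨c, d⟩ x y t h1 h2 h5 h6
    rcases h1 with h1 | h1
    · rcases h2 with h2 | h2
      · left
        simp only at *
        rcases le_total 0 c with hb | hb <;> nlinarith
      · exact Or.inr h2
    · exact Or.inr h1

theorem good_ZZ_base1 : Good ↥{p : (ℝ × ℝ) × ℝ | -(p.2 * (1 - p.1.1 * p.1.2)) ≠ 0 ∨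
    0 < 1 - p.1.1 * p.1.2 - p.2 * p.1.1} := by
  refine good_ZZ_base1a.split good_ZZ_base1b
    (open_and (isOpen_lt (by fun_prop) (by fun_prop)) (isOpen_lt (by fun_prop) (by fun_prop)))
    (open_or (isOpen_lt (by fun_prop) (by fun_prop)) (isOpen_lt (by fun_prop) (by fun_prop)))
    ?_ ?_
  · rintro ⟨⟨c, d⟩, a⟩ ⟨h1, h2⟩ (h3 | h3) <;> simp only at * <;> linarith
  · rintro ⟨⟨c, d⟩, a⟩
    simp only [Set.mem_ofPred_eq, neg_ne_zero, mul_ne_zero_iff]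
    constructor
    · intro h
      rcases lt_trichotomy (c * d) 1 with hq | hq | hq
      · exact Or.inr (Or.inr hq)
      · rcases h with h | h
        · exact absurd (by linarith) h.2
        · exact Or.inr (Or.inl (by linarith))
      · have hc : c ≠ 0 := by rintro rfl; norm_num at hq
        have ha : a ≠ 0 := by
          rintro rfl
          rcases h with h | h
          · exact h.1 rfl
          · linarith
        rcases lt_or_gt_of_ne (mul_ne_zero ha hc) with h | h
        · exact Or.inr (Or.inl h)
        · exact Or.inl ⟨h, hq⟩
    · rintro (⟨h1, h2⟩ | h | h)
      · refine Or.inl ⟨?_, by linarith⟩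
        rintro rfl
        norm_num at h1
      · by_cases hq : 1 - c * d = 0
        · exact Or.inr (by linarith)
        · refine Or.inl ⟨?_, hq⟩
          rintro rfl
          norm_num at h
      · by_cases ha : a = 0
        · subst ha
          exact Or.inr (by linarith)
        · exact Or.inl ⟨ha, by linarith⟩

theorem good_ZZ_base2a : Good ↥{p : (ℝ × ℝ) × ℝ | (0 < p.2 ∧ p.1.1 * p.1.2 < 1) ∨
    (0 < p.1.1 ∧ 1 < p.1.1 * p.1.2) ∨ (0 < p.2 ∧ 0 < p.1.1)} := by
  have g1 : Good ↥{p : ℝ × ℝ | p.1 * p.2 < 1 ∨ 0 < p.1} := by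
    refine (good_univ (E := ℝ)).elim'
      (open_or (isOpen_lt (by fun_prop) (by fun_prop)) (isOpen_lt (by fun_prop) (by fun_prop)))
      ?_ ?_ ?_
    · intro b t h
      trivial
    · intro b hb
      exact ⟨0, Or.inl (by simp)⟩
    · intro b x y t h1 h2 h5 h6
      rcases lt_or_ge 0 b with hb | hb
      · exact Or.inr hb
      · rcases h1 with h1 | h1
        · refine Or.inl ?_
          simp only at *
          nlinarith
        · exact Or.inr h1
  refine g1.elim' ?_ ?_ ?_ ?_
  · refine open_or ?_ (open_or ?_ ?_) <;>
      exact open_and (isOpen_lt (by fun_prop) (by fun_prop)) (isOpen_lt (by fun_prop) (by fun_prop))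
  · rintro ⟨c, d⟩ t (h | h | h)
    · exact Or.inl h.2
    · exact Or.inr h.1
    · exact Or.inr h.2
  · rintro ⟨c, d⟩ (h | h)
    · exact ⟨1, Or.inl ⟨one_pos, h⟩⟩
    · exact ⟨1, Or.inr (Or.inr ⟨one_pos, h⟩)⟩
  · rintro ⟨c, d⟩ x y t h1 h2 h5 h6
    rcases h1 with h1 | h1 | h1
    · exact Or.inl ⟨lt_of_lt_of_le h1.1 h5, h1.2⟩
    · exact Or.inr (Or.inl h1)
    · exact Or.inr (Or.inr ⟨lt_of_lt_of_le h1.1 h5, h1.2⟩)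

theorem good_ZZ_base2b : Good ↥{p : (ℝ × ℝ) × ℝ | (p.2 < 0 ∧ p.1.1 * p.1.2 < 1) ∨
    (p.1.1 < 0 ∧ 1 < p.1.1 * p.1.2) ∨ (p.2 < 0 ∧ p.1.1 < 0)} := by
  refine good_ZZ_base2a.of_leftInv (fun p => ((-p.1.1, -p.1.2), -p.2))
    (fun p => ((-p.1.1, -p.1.2), -p.2)) (by fun_prop) (by fun_prop) ?_ ?_ ?_
  · rintro ⟨⟨c, d⟩, a⟩ h
    simpa using h
  · rintro ⟨⟨c, d⟩, a⟩ h
    simpa using h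
  · rintro ⟨⟨c, d⟩, a⟩ h
    simp

theorem good_ZZ_base2 : Good ↥{p : (ℝ × ℝ) × ℝ | -(p.2 * (1 - p.1.1 * p.1.2)) ≠ 0 ∨
    1 - p.1.1 * p.1.2 - p.2 * p.1.1 < 0} := by
  refine good_ZZ_base2a.split good_ZZ_base2b ?_ ?_ ?_ ?_
  · refine open_or ?_ (open_or ?_ ?_) <;>
      exact open_and (isOpen_lt (by fun_prop) (by fun_prop)) (isOpen_lt (by fun_prop) (by fun_prop))
  · refine open_or ?_ (open_or ?_ ?_) <;>
      exact open_and (isOpen_lt (by fun_prop) (by fun_prop)) (isOpen_lt (by fun_prop) (by fun_prop))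
  · rintro ⟨⟨c, d⟩, a⟩ (⟨h1, h2⟩ | ⟨h1, h2⟩ | ⟨h1, h2⟩) (⟨h3, h4⟩ | ⟨h3, h4⟩ | ⟨h3, h4⟩) <;>
      simp only at * <;> linarith
  · rintro ⟨⟨c, d⟩, a⟩
    simp only [Set.mem_ofPred_eq, neg_ne_zero, mul_ne_zero_iff]
    constructor
    · intro h
      rcases lt_trichotomy (c * d) 1 with hq | hq | hq
      · rcases lt_trichotomy a 0 with ha | rfl | ha
        · exact Or.inr (Or.inl ⟨ha, hq⟩)
        · rcases h with h | h
          · exact absurd rfl h.1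
          · linarith
        · exact Or.inl (Or.inl ⟨ha, hq⟩)
      · have h' : 0 < a * c := by
          rcases h with h | h
          · exact absurd (by linarith) h.2
          · linarith
        rcases pos_and_pos_or_neg_and_neg_of_mul_pos h' with h | h
        · exact Or.inl (Or.inr (Or.inr h))
        · exact Or.inr (Or.inr (Or.inr h))
      · rcases lt_trichotomy c 0 with hc | rfl | hc
        · exact Or.inr (Or.inr (Or.inl ⟨hc, hq⟩))
        · norm_num at hq
        · exact Or.inl (Or.inr (Or.inl ⟨hc, hq⟩))
    · intro h
      by_cases ha : a = 0
      · subst ha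
        right
        rcases h with (h | h | h) | (h | h | h) <;> [skip; skip; skip; skip; skip; skip] <;>
          first | exact absurd h.1 (lt_irrefl _) | linarith [h.2]
      · by_cases hq : 1 - c * d = 0
        · right
          have : 0 < a * c := by
            rcases h with (h | h | h) | (h | h | h)
            · linarith [h.2]
            · linarith [h.2]
            · exact mul_pos h.1 h.2
            · linarith [h.2]
            · linarith [h.2]
            · exact mul_pos_of_neg_of_neg h.1 h.2
          linarith
        · exact Or.inl ⟨ha, hq⟩

/-- The four-dimensional model, with coordinates `(((c, d), a), e)`: the function is
`(1 - a e) (1 - c d) - a c`. -/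
def ZZ : Set (((ℝ × ℝ) × ℝ) × ℝ) := {p | -(p.1.2 * (1 - p.1.1.1 * p.1.1.2)) * p.2 +
  (1 - p.1.1.1 * p.1.1.2 - p.1.2 * p.1.1.1) ≠ 0}

theorem good_ZZ : Good ↥ZZ :=
  Good.affine (E := (ℝ × ℝ) × ℝ) (α := fun p => -(p.2 * (1 - p.1.1 * p.1.2)))
    (β := fun p => 1 - p.1.1 * p.1.2 - p.2 * p.1.1) (by fun_prop) (by fun_prop)
    good_ZZ_base1 good_ZZ_base2

end Models

section BruhatCells

theorem mem_upInv_iff {m : ℕ} {U : Matrix (Fin m) (Fin m) ℝ} :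
    U ∈ UpInv m ↔ (∀ i j : Fin m, j < i → U i j = 0) ∧ ∀ i, U i i ≠ 0 := by
  unfold UpInv
  simp only [Set.mem_ofPred_eq]
  refine and_congr_right fun h => ?_
  have hU : U.BlockTriangular id := fun i j hij => h i j hij
  rw [Matrix.det_of_isUpperTriangular hU, isUnit_iff_ne_zero, Finset.prod_ne_zero_iff]
  simp

theorem upInv_inv {m : ℕ} {U : Matrix (Fin m) (Fin m) ℝ} (hU : U ∈ UpInv m) : U⁻¹ ∈ UpInv m := by
  obtain ⟨h1, h2⟩ := hU
  have hT : U.BlockTriangular id := fun i j hij => h1 i j hij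
  let := Matrix.invertibleOfIsUnitDet U h2
  refine ⟨fun i j hij => Matrix.blockTriangular_inv_of_blockTriangular hT hij, ?_⟩
  exact Matrix.isUnit_nonsing_inv_det U h2

theorem permMat_mul {m : ℕ} (σ : Equiv.Perm (Fin m)) (U : Matrix (Fin m) (Fin m) ℝ) (i j : Fin m) :
    (permMat m σ * U) i j = U (σ i) j := by
  simp [permMat, Matrix.mul_apply]

/-- The Bruhat cell through row reduction by upper triangular matrices. -/
theorem mem_bru_iff {m : ℕ} (σ : Equiv.Perm (Fin m)) (M : Matrix (Fin m) (Fin m) ℝ) :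
    M ∈ Bru m σ ↔ ∃ A ∈ UpInv m, ∀ i, (A * M) i (σ i) ≠ 0 ∧ ∀ j < σ i, (A * M) i j = 0 := by
  constructor
  · rintro ⟨U₀, h₀, U₁, h₁, rfl⟩
    refine ⟨U₀⁻¹, upInv_inv h₀, fun i => ?_⟩
    have : U₀⁻¹ * (U₀ * permMat m σ * U₁) = permMat m σ * U₁ := by
      rw [Matrix.mul_assoc, Matrix.nonsing_inv_mul_cancel_left _ _ h₀.2]
    rw [this]
    rw [mem_upInv_iff] at h₁
    refine ⟨?_, fun j hj => ?_⟩
    · rw [permMat_mul]; exact h₁.2 _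
    · rw [permMat_mul]; exact h₁.1 _ _ hj
  · rintro ⟨A, hA, h⟩
    refine ⟨A⁻¹, upInv_inv hA, (A * M).submatrix σ.symm id, ?_, ?_⟩
    · rw [mem_upInv_iff]
      constructor
      · intro i j hij
        exact (h (σ.symm i)).2 j (by simpa using hij)
      · intro i
        simpa using (h (σ.symm i)).1
    · have : permMat m σ * (A * M).submatrix σ.symm id = A * M := by
        ext i j
        rw [permMat_mul]
        simp
      rw [Matrix.mul_assoc, this, Matrix.nonsing_inv_mul_cancel_left _ _ hA.2]

/-- The vector `v` has its first nonzero entry at position `k`. -/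
def Lead (v : Fin 4 → ℝ) (k : Fin 4) : Prop := v k ≠ 0 ∧ ∀ j < k, v j = 0

theorem lead_zero (x y z w : ℝ) : Lead ![x, y, z, w] 0 ↔ x ≠ 0 := by
  simp [Lead]

theorem lead_one (x y z w : ℝ) : Lead ![x, y, z, w] 1 ↔ x = 0 ∧ y ≠ 0 := by
  simp [Lead, Fin.forall_fin_succ]
  tauto

theorem lead_two (x y z w : ℝ) : Lead ![x, y, z, w] 2 ↔ x = 0 ∧ y = 0 ∧ z ≠ 0 := by
  simp [Lead, Fin.forall_fin_succ]
  tauto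

theorem lead_three (x y z w : ℝ) : Lead ![x, y, z, w] 3 ↔ x = 0 ∧ y = 0 ∧ z = 0 ∧ w ≠ 0 := by
  simp [Lead, Fin.forall_fin_succ]
  tauto

/-- The general element of `Lo¹₄`. -/
def Lm (a b c d e f : ℝ) : Matrix (Fin 4) (Fin 4) ℝ :=
  !![1, 0, 0, 0; a, 1, 0, 0; d, b, 1, 0; f, e, c, 1]

theorem Lead.smul {v : Fin 4 → ℝ} {k : Fin 4} (h : Lead v k) {c : ℝ} (hc : c ≠ 0) {w : Fin 4 → ℝ}
    (hw : ∀ j, w j = c * v j) : Lead w k :=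
  ⟨by rw [hw]; exact mul_ne_zero hc h.1, fun j hj => by rw [hw, h.2 j hj, mul_zero]⟩

theorem lm_mem_bru (σ : Equiv.Perm (Fin 4)) (a b c d e f : ℝ) :
    Lm a b c d e f ∈ Bru 4 σ ↔ Lead ![f, e, c, 1] (σ 3) ∧
      (∃ x, Lead ![d + x * f, b + x * e, 1 + x * c, x] (σ 2)) ∧
      (∃ y z, Lead ![a + y * d + z * f, 1 + y * b + z * e, y + z * c, z] (σ 1)) ∧
      ∃ p q r, Lead ![1 + p * a + q * d + r * f, p + q * b + r * e, q + r * c, r] (σ 0) := by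
  rw [mem_bru_iff]
  constructor
  · rintro ⟨A, hA, h⟩
    obtain ⟨hT, hD⟩ := mem_upInv_iff.1 hA
    have e10 := hT 1 0 (by decide)
    have e20 := hT 2 0 (by decide)
    have e21 := hT 2 1 (by decide)
    have e30 := hT 3 0 (by decide)
    have e31 := hT 3 1 (by decide)
    have e32 := hT 3 2 (by decide)
    have l : ∀ i, Lead ((A * Lm a b c d e f) i) (σ i) := fun i => h i
    have d0 := hD 0
    have d1 := hD 1
    have d2 := hD 2
    have d3 := hD 3
    refine ⟨(l 3).smul (inv_ne_zero d3) ?_,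
      ⟨A 2 3 / A 2 2, (l 2).smul (inv_ne_zero d2) ?_⟩,
      ⟨A 1 2 / A 1 1, A 1 3 / A 1 1, (l 1).smul (inv_ne_zero d1) ?_⟩,
      ⟨A 0 1 / A 0 0, A 0 2 / A 0 0, A 0 3 / A 0 0, (l 0).smul (inv_ne_zero d0) ?_⟩⟩ <;>
    · intro j
      fin_cases j <;> simp [Matrix.mul_apply, Fin.sum_univ_four, Lm, *] <;> field_simp
  · rintro ⟨h3, ⟨x, h2⟩, ⟨y, z, h1⟩, p, q, r, h0⟩
    refine ⟨!![1, p, q, r; 0, 1, y, z; 0, 0, 1, x; 0, 0, 0, 1], ?_, ?_⟩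
    · rw [mem_upInv_iff]
      constructor
      · intro i j hij
        fin_cases i <;> fin_cases j <;> first | rfl | (exact absurd hij (by decide))
      · intro i
        fin_cases i <;> simp
    · have key : !![1, p, q, r; 0, 1, y, z; 0, 0, 1, x; 0, 0, 0, 1] * Lm a b c d e f =
        ![![1 + p * a + q * d + r * f, p + q * b + r * e, q + r * c, r],
          ![a + y * d + z * f, 1 + y * b + z * e, y + z * c, z],
          ![d + x * f, b + x * e, 1 + x * c, x], ![f, e, c, 1]] := by
        ext i j
        fin_cases i <;> fin_cases j <;> simp [Matrix.mul_apply, Fin.sum_univ_four, Lm]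
      rw [key]
      intro i
      fin_cases i
      · exact h0
      · exact h1
      · exact h2
      · exact h3

/-- The coordinates of the cell. -/
def W (σ : Equiv.Perm (Fin 4)) : Set (ℝ × ℝ × ℝ × ℝ × ℝ × ℝ) :=
  {p | Lm p.1 p.2.1 p.2.2.1 p.2.2.2.1 p.2.2.2.2.1 p.2.2.2.2.2 ∈ Bru 4 σ}

theorem good_BL_of_good_W {σ : Equiv.Perm (Fin 4)} (h : Good ↥(W σ)) : Good ↥(BL 4 σ) := by
  have hL : ∀ L ∈ Lo1 4, Lm (L 1 0) (L 2 1) (L 3 2) (L 2 0) (L 3 1) (L 3 0) = L := by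
    rintro L ⟨h1, h2⟩
    ext i j
    fin_cases i <;> fin_cases j <;> simp [Lm, h1] <;> exact (h2 _ _ (by decide)).symm
  refine h.of_leftInv (fun L => (L 1 0, L 2 1, L 3 2, L 2 0, L 3 1, L 3 0))
    (fun p => Lm p.1 p.2.1 p.2.2.1 p.2.2.2.1 p.2.2.2.2.1 p.2.2.2.2.2) ?_ ?_ ?_ ?_ ?_
  · fun_prop
  · refine Continuous.continuousOn (continuous_matrix fun i j => ?_)
    fin_cases i <;> fin_cases j <;> simp [Lm] <;> fun_prop
  · rintro L ⟨h1, h2⟩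
    simp only [W, Set.mem_ofPred_eq]
    rw [hL L h1]
    exact h2
  · intro p hp
    refine ⟨⟨fun i => ?_, fun i j hij => ?_⟩, hp⟩
    · fin_cases i <;> simp [Lm]
    · fin_cases i <;> fin_cases j <;> first | rfl | (exact absurd hij (by decide))
  · rintro L ⟨h1, h2⟩
    exact hL L h1

end BruhatCells

section MoreModels

/-- Points `(z, x, y)` with `z ≠ 0` and `z ≠ x y`. -/
def TT : Set (ℝ × ℝ × ℝ) := {p | p.1 ≠ 0 ∧ p.1 ≠ p.2.1 * p.2.2}

theorem good_TT : Good ↥TT := by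
  refine (good_Rs.setProd good_HH).of_leftInv (fun p => (p.1, p.2.1 / p.1, p.2.2))
    (fun p => (p.1, p.2.1 * p.1, p.2.2)) ?_ (by fun_prop) ?_ ?_ ?_
  · exact ContinuousOn.prodMk (by fun_prop) (ContinuousOn.prodMk
      (ContinuousOn.div (by fun_prop) (by fun_prop) fun p hp => hp.1) (by fun_prop))
  · rintro ⟨z, x, y⟩ ⟨h1, h2⟩
    refine ⟨h1, fun h => h2 ?_⟩
    simp only at *
    field_simp at h
    linarith
  · rintro ⟨z, x, y⟩ ⟨h1, h2⟩
    refine ⟨h1, fun h => h2 ?_⟩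
    simp only [Rs, Set.mem_ofPred_eq] at *
    have : z * (x * y + -1) = 0 := by linarith
    exact (mul_eq_zero.1 this).resolve_left h1
  · rintro ⟨z, x, y⟩ ⟨h1, h2⟩
    simp only at *
    rw [div_mul_cancel₀ _ h1]

/-- Points `(f, a, e, c, d)` with `f ≠ 0`, `f ≠ a e`, `f ≠ c d`. -/
def QQ : Set (ℝ × ℝ × ℝ × ℝ × ℝ) := {p | p.1 ≠ 0 ∧ p.1 - p.2.1 * p.2.2.1 ≠ 0 ∧
  p.1 - p.2.2.2.1 * p.2.2.2.2 ≠ 0}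

theorem good_QQ : Good ↥QQ := by
  refine (good_Rs.setProd (good_HH.setProd good_HH)).of_leftInv
    (fun p => (p.1, (p.2.1 / p.1, p.2.2.1), (p.2.2.2.1 / p.1, p.2.2.2.2)))
    (fun p => (p.1, p.2.1.1 * p.1, p.2.1.2, p.2.2.1 * p.1, p.2.2.2)) ?_ (by fun_prop) ?_ ?_ ?_
  · have hd : ∀ p ∈ QQ, p.1 ≠ 0 := fun p hp => hp.1
    refine ContinuousOn.prodMk (by fun_prop) (ContinuousOn.prodMk (ContinuousOn.prodMk ?_ ?_)
      (ContinuousOn.prodMk ?_ ?_))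
    · exact ContinuousOn.div (by fun_prop) (by fun_prop) hd
    · fun_prop
    · exact ContinuousOn.div (by fun_prop) (by fun_prop) hd
    · fun_prop
  · rintro ⟨f, a, e, c, d⟩ ⟨h1, h2, h3⟩
    refine ⟨h1, fun h => h2 ?_, fun h => h3 ?_⟩
    · simp only at *
      field_simp at h
      linarith
    · simp only at *
      field_simp at h
      linarith
  · rintro ⟨f, ⟨a, e⟩, ⟨c, d⟩⟩ ⟨h1, h2, h3⟩
    simp only [Rs, Set.mem_ofPred_eq] at *
    refine ⟨h1, fun h => h2 ?_, fun h => h3 ?_⟩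
    · have : f * (a * e + -1) = 0 := by simp only at h; linarith
      exact (mul_eq_zero.1 this).resolve_left h1
    · have : f * (c * d + -1) = 0 := by simp only at h; linarith
      exact (mul_eq_zero.1 this).resolve_left h1
  · rintro ⟨f, a, e, c, d⟩ ⟨h1, h2, h3⟩
    simp only at *
    rw [div_mul_cancel₀ _ h1, div_mul_cancel₀ _ h1]

/-- Points `(d, e, a, b, c)` with `d ≠ 0`, `e ≠ 0`, `a e + c d - a b c ≠ 0`. -/
def KK : Set (ℝ × ℝ × ℝ × ℝ × ℝ) := {p | p.1 ≠ 0 ∧ p.2.1 ≠ 0 ∧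
  p.2.2.1 * p.2.1 + p.2.2.2.2 * p.1 - p.2.2.1 * p.2.2.2.1 * p.2.2.2.2 ≠ 0}

theorem good_KK : Good ↥KK := by
  refine (good_Rs.setProd (good_Rs.setProd good_AA)).of_leftInv
    (fun p => (p.1, p.2.1, (p.2.2.2.2 * p.1, p.2.2.2.1 / (p.1 * p.2.1)), p.2.2.1 * p.2.1))
    (fun p => (p.1, p.2.1, p.2.2.2 / p.2.1, p.2.2.1.2 * (p.1 * p.2.1), p.2.2.1.1 / p.1))
    ?_ ?_ ?_ ?_ ?_
  · refine ContinuousOn.prodMk (by fun_prop) (ContinuousOn.prodMk (by fun_prop)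
      (ContinuousOn.prodMk (ContinuousOn.prodMk (by fun_prop) ?_) (by fun_prop)))
    exact ContinuousOn.div (by fun_prop) (by fun_prop) fun p hp => mul_ne_zero hp.1 hp.2.1
  · refine ContinuousOn.prodMk (by fun_prop) (ContinuousOn.prodMk (by fun_prop)
      (ContinuousOn.prodMk ?_ (ContinuousOn.prodMk (by fun_prop) ?_)))
    · exact ContinuousOn.div (by fun_prop) (by fun_prop) fun p hp => hp.2.1
    · exact ContinuousOn.div (by fun_prop) (by fun_prop) fun p hp => hp.1
  · rintro ⟨d, e, a, b, c⟩ ⟨h1, h2, h3⟩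
    simp only at *
    refine ⟨h1, h2, fun h => h3 ?_⟩
    simp only at h
    field_simp at h
    linarith
  · rintro ⟨d, e, ⟨c, b⟩, a⟩ ⟨h1, h2, h3⟩
    simp only [Rs, Set.mem_ofPred_eq] at *
    refine ⟨h1, h2, fun h => h3 ?_⟩
    simp only at *
    field_simp at h
    linarith
  · rintro ⟨d, e, a, b, c⟩ ⟨h1, h2, h3⟩
    simp only at *
    simp only [Prod.mk.injEq, true_and]
    refine ⟨?_, ?_, ?_⟩ <;> field_simp

/-- Points `(f, m, a, c, d, e)` with `f ≠ 0`, `m ≠ 0`, `(f - a e) (f - c d) ≠ a c m`. -/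
def OO : Set (ℝ × ℝ × ℝ × ℝ × ℝ × ℝ) := {p | p.1 ≠ 0 ∧ p.2.1 ≠ 0 ∧
  (p.1 - p.2.2.1 * p.2.2.2.2.2) * (p.1 - p.2.2.2.1 * p.2.2.2.2.1) -
    p.2.2.1 * p.2.2.2.1 * p.2.1 ≠ 0}

theorem good_OO : Good ↥OO := by
  refine (good_Rs.setProd (good_Rs.setProd good_ZZ)).of_leftInv
    (fun p => (p.1, p.2.1, ((p.2.2.2.1, p.2.2.2.2.1 / p.1), p.2.2.1 * p.2.1 / p.1 ^ 2),
      p.2.2.2.2.2 * p.1 / p.2.1))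
    (fun p => (p.1, p.2.1, p.2.2.1.2 * p.1 ^ 2 / p.2.1, p.2.2.1.1.1, p.2.2.1.1.2 * p.1,
      p.2.2.2 * p.2.1 / p.1))
    ?_ ?_ ?_ ?_ ?_
  · refine ContinuousOn.prodMk (by fun_prop) (ContinuousOn.prodMk (by fun_prop)
      (ContinuousOn.prodMk (ContinuousOn.prodMk (ContinuousOn.prodMk (by fun_prop) ?_) ?_) ?_))
    · exact ContinuousOn.div (by fun_prop) (by fun_prop) fun p hp => hp.1
    · exact ContinuousOn.div (by fun_prop) (by fun_prop) fun p hp => pow_ne_zero 2 hp.1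
    · exact ContinuousOn.div (by fun_prop) (by fun_prop) fun p hp => hp.2.1
  · refine ContinuousOn.prodMk (by fun_prop) (ContinuousOn.prodMk (by fun_prop)
      (ContinuousOn.prodMk ?_ (ContinuousOn.prodMk (by fun_prop)
        (ContinuousOn.prodMk (by fun_prop) ?_))))
    · exact ContinuousOn.div (by fun_prop) (by fun_prop) fun p hp => hp.2.1
    · exact ContinuousOn.div (by fun_prop) (by fun_prop) fun p hp => hp.1
  · rintro ⟨f, m, a, c, d, e⟩ ⟨h1, h2, h3⟩
    simp only at *
    refine ⟨h1, h2, fun h => h3 ?_⟩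
    simp only at h
    field_simp at h
    linarith
  · rintro ⟨f, m, ⟨⟨c, d⟩, a⟩, e⟩ ⟨h1, h2, h3⟩
    simp only [Rs, Set.mem_ofPred_eq] at *
    refine ⟨h1, h2, fun h => h3 ?_⟩
    simp only at *
    field_simp at h
    have h4 := (mul_eq_zero.1 h).resolve_left (pow_ne_zero 2 h1)
    linarith
  · rintro ⟨f, m, a, c, d, e⟩ ⟨h1, h2, h3⟩
    simp only at *
    simp only [Prod.mk.injEq, true_and]
    refine ⟨?_, ?_, ?_⟩ <;> field_simp

end MoreModels

section Cells

set_option linter.unusedSimpArgs false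

theorem good_W_3210 {σ : Equiv.Perm (Fin 4)} (h0 : σ 0 = 3) (h1 : σ 1 = 2) (h2 : σ 2 = 1)
    (h3 : σ 3 = 0) : Good ↥(W σ) := by
  have key : ∀ a b c d e f : ℝ, Lm a b c d e f ∈ Bru 4 σ ↔
      f ≠ 0 ∧ d * e - b * f ≠ 0 ∧ f + a * b * c - a * e - c * d ≠ 0 := by
    intro a b c d e f
    rw [lm_mem_bru, h0, h1, h2, h3]
    simp only [lead_zero, lead_one, lead_two, lead_three]
    constructor
    · rintro ⟨k3, ⟨x, k2⟩, ⟨y, z, k1⟩, p, q, r, k0⟩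
      grind
    · rintro ⟨k0, k1, k2⟩
      refine ⟨?_, ⟨-d / f, ?_⟩, ⟨(f - a * e) / (d * e - b * f), (a * b - d) / (d * e - b * f), ?_⟩,
        (b * c - e) * (-1 / (f + a * b * c - a * e - c * d)), c / (f + a * b * c - a * e - c * d), -1 / (f + a * b * c - a * e - c * d), ?_⟩ <;> grind
  refine (good_OO).of_leftInv (fun p => (p.2.2.2.2.2, p.2.2.2.1 * p.2.2.2.2.1 - p.2.1 * p.2.2.2.2.2, p.1, p.2.2.1, p.2.2.2.1, p.2.2.2.2.1))
    (fun p => (p.2.2.1, (p.2.2.2.2.1 * p.2.2.2.2.2 - p.2.1) / p.1, p.2.2.2.1, p.2.2.2.2.1, p.2.2.2.2.2, p.1))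
    (by fun_prop) (by
      refine ContinuousOn.prodMk (by fun_prop) (ContinuousOn.prodMk (ContinuousOn.div (by fun_prop) (by fun_prop) fun p hp => ?_) (by fun_prop))
      exact hp.1) ?_ ?_ ?_
  rotate_left
  · rintro ⟨f, m, a, c, d, e⟩ h
    refine (key _ _ _ _ _ _).2 ?_
    simp only [OO, Set.mem_ofPred_eq, Prod.mk.injEq] at h ⊢
    grind
  all_goals
    rintro ⟨a, b, c, d, e, f⟩ h
    replace h := (key a b c d e f).1 h
    simp only [OO, Set.mem_ofPred_eq, Prod.mk.injEq] at h ⊢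
    grind

theorem good_W_2310 {σ : Equiv.Perm (Fin 4)} (h0 : σ 0 = 2) (h1 : σ 1 = 3) (h2 : σ 2 = 1)
    (h3 : σ 3 = 0) : Good ↥(W σ) := by
  have key : ∀ a b c d e f : ℝ, Lm a b c d e f ∈ Bru 4 σ ↔
      d - a * b ≠ 0 ∧ e - b * c ≠ 0 ∧ f ≠ 0 ∧ f = a * e + c * d - a * b * c := by
    intro a b c d e f
    rw [lm_mem_bru, h0, h1, h2, h3]
    simp only [lead_zero, lead_one, lead_two, lead_three]
    constructor
    · rintro ⟨k3, ⟨x, k2⟩, ⟨y, z, k1⟩, p, q, r, k0⟩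
      grind
    · rintro ⟨k0, k1, k2, k3⟩
      refine ⟨?_, ⟨-d / f, ?_⟩, ⟨(f - a * e) / (d * e - b * f), (a * b - d) / (d * e - b * f), ?_⟩,
        -(1 / (a * b - d)) * b, 1 / (a * b - d), 0, ?_⟩ <;> grind
  refine (good_KK).of_leftInv (fun p => (p.2.2.2.1 - p.1 * p.2.1, p.2.2.2.2.1 - p.2.1 * p.2.2.1, p.1, -p.2.1, p.2.2.1))
    (fun p => (p.2.2.1, -p.2.2.2.1, p.2.2.2.2, p.1 - p.2.2.1 * p.2.2.2.1, p.2.1 - p.2.2.2.1 * p.2.2.2.2, p.2.2.1 * p.2.1 + p.2.2.2.2 * p.1 - p.2.2.1 * p.2.2.2.1 * p.2.2.2.2))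
    (by fun_prop) (by fun_prop) ?_ ?_ ?_
  rotate_left
  · rintro ⟨d, e, a, b, c⟩ h
    refine (key _ _ _ _ _ _).2 ?_
    simp only [KK, Set.mem_ofPred_eq, Prod.mk.injEq] at h ⊢
    grind
  all_goals
    rintro ⟨a, b, c, d, e, f⟩ h
    replace h := (key a b c d e f).1 h
    simp only [KK, Set.mem_ofPred_eq, Prod.mk.injEq] at h ⊢
    grind

theorem good_W_3120 {σ : Equiv.Perm (Fin 4)} (h0 : σ 0 = 3) (h1 : σ 1 = 1) (h2 : σ 2 = 2)
    (h3 : σ 3 = 0) : Good ↥(W σ) := by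
  have key : ∀ a b c d e f : ℝ, Lm a b c d e f ∈ Bru 4 σ ↔
      f ≠ 0 ∧ f - a * e ≠ 0 ∧ f - c * d ≠ 0 ∧ b = d * e / f := by
    intro a b c d e f
    rw [lm_mem_bru, h0, h1, h2, h3]
    simp only [lead_zero, lead_one, lead_two, lead_three]
    constructor
    · rintro ⟨k3, ⟨x, k2⟩, ⟨y, z, k1⟩, p, q, r, k0⟩
      grind
    · rintro ⟨k0, k1, k2, k3⟩
      refine ⟨?_, ⟨-d / f, ?_⟩, ⟨0, -a / f, ?_⟩,
        (b * c - e) * (-1 / (f + a * b * c - a * e - c * d)), c / (f + a * b * c - a * e - c * d), -1 / (f + a * b * c - a * e - c * d), ?_⟩ <;> grind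
  refine (good_QQ).of_leftInv (fun p => (p.2.2.2.2.2, p.1, p.2.2.2.2.1, p.2.2.1, p.2.2.2.1))
    (fun p => (p.2.1, p.2.2.2.2 * p.2.2.1 / p.1, p.2.2.2.1, p.2.2.2.2, p.2.2.1, p.1))
    (by fun_prop) (by
      refine ContinuousOn.prodMk (by fun_prop) (ContinuousOn.prodMk (ContinuousOn.div (by fun_prop) (by fun_prop) fun p hp => ?_) (by fun_prop))
      exact hp.1) ?_ ?_ ?_
  rotate_left
  · rintro ⟨f, a, e, c, d⟩ h
    refine (key _ _ _ _ _ _).2 ?_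
    simp only [QQ, Set.mem_ofPred_eq, Prod.mk.injEq] at h ⊢
    grind
  all_goals
    rintro ⟨a, b, c, d, e, f⟩ h
    replace h := (key a b c d e f).1 h
    simp only [QQ, Set.mem_ofPred_eq, Prod.mk.injEq] at h ⊢
    grind

theorem good_W_1320 {σ : Equiv.Perm (Fin 4)} (h0 : σ 0 = 1) (h1 : σ 1 = 3) (h2 : σ 2 = 2)
    (h3 : σ 3 = 0) : Good ↥(W σ) := by
  have key : ∀ a b c d e f : ℝ, Lm a b c d e f ∈ Bru 4 σ ↔
      a ≠ 0 ∧ e ≠ 0 ∧ e ≠ b * c ∧ d = a * b ∧ f = a * e := by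
    intro a b c d e f
    rw [lm_mem_bru, h0, h1, h2, h3]
    simp only [lead_zero, lead_one, lead_two, lead_three]
    constructor
    · rintro ⟨k3, ⟨x, k2⟩, ⟨y, z, k1⟩, p, q, r, k0⟩
      grind
    · rintro ⟨k0, k1, k2, k3, k4⟩
      refine ⟨?_, ⟨-d / f, ?_⟩, ⟨c / (e - b * c), -1 / (e - b * c), ?_⟩,
        -1 / a, 0, 0, ?_⟩ <;> grind
  refine (good_Rs.setProd good_TT).of_leftInv (fun p => (p.1, p.2.2.2.2.1, p.2.1, p.2.2.1))
    (fun p => (p.1, p.2.2.1, p.2.2.2, p.1 * p.2.2.1, p.2.1, p.1 * p.2.1))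
    (by fun_prop) (by fun_prop) ?_ ?_ ?_
  rotate_left
  · rintro ⟨a, e, b, c⟩ h
    refine (key _ _ _ _ _ _).2 ?_
    simp only [Set.mem_prod, Rs, TT, Set.mem_ofPred_eq, Prod.mk.injEq] at h ⊢
    grind
  all_goals
    rintro ⟨a, b, c, d, e, f⟩ h
    replace h := (key a b c d e f).1 h
    simp only [Set.mem_prod, Rs, TT, Set.mem_ofPred_eq, Prod.mk.injEq] at h ⊢
    grind

theorem good_W_2130 {σ : Equiv.Perm (Fin 4)} (h0 : σ 0 = 2) (h1 : σ 1 = 1) (h2 : σ 2 = 3)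
    (h3 : σ 3 = 0) : Good ↥(W σ) := by
  have key : ∀ a b c d e f : ℝ, Lm a b c d e f ∈ Bru 4 σ ↔
      c ≠ 0 ∧ d ≠ 0 ∧ d ≠ a * b ∧ e = b * c ∧ f = c * d := by
    intro a b c d e f
    rw [lm_mem_bru, h0, h1, h2, h3]
    simp only [lead_zero, lead_one, lead_two, lead_three]
    constructor
    · rintro ⟨k3, ⟨x, k2⟩, ⟨y, z, k1⟩, p, q, r, k0⟩
      grind
    · rintro ⟨k0, k1, k2, k3, k4⟩
      refine ⟨?_, ⟨-1 / c, ?_⟩, ⟨0, -a / f, ?_⟩,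
        -(1 / (a * b - d)) * b, 1 / (a * b - d), 0, ?_⟩ <;> grind
  refine (good_Rs.setProd good_TT).of_leftInv (fun p => (p.2.2.1, p.2.2.2.1, p.1, p.2.1))
    (fun p => (p.2.2.1, p.2.2.2, p.1, p.2.1, p.2.2.2 * p.1, p.1 * p.2.1))
    (by fun_prop) (by fun_prop) ?_ ?_ ?_
  rotate_left
  · rintro ⟨c, d, a, b⟩ h
    refine (key _ _ _ _ _ _).2 ?_
    simp only [Set.mem_prod, Rs, TT, Set.mem_ofPred_eq, Prod.mk.injEq] at h ⊢
    grind
  all_goals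
    rintro ⟨a, b, c, d, e, f⟩ h
    replace h := (key a b c d e f).1 h
    simp only [Set.mem_prod, Rs, TT, Set.mem_ofPred_eq, Prod.mk.injEq] at h ⊢
    grind

theorem good_W_1230 {σ : Equiv.Perm (Fin 4)} (h0 : σ 0 = 1) (h1 : σ 1 = 2) (h2 : σ 2 = 3)
    (h3 : σ 3 = 0) : Good ↥(W σ) := by
  have key : ∀ a b c d e f : ℝ, Lm a b c d e f ∈ Bru 4 σ ↔
      a ≠ 0 ∧ b ≠ 0 ∧ c ≠ 0 ∧ d = a * b ∧ e = b * c ∧ f = a * b * c := by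
    intro a b c d e f
    rw [lm_mem_bru, h0, h1, h2, h3]
    simp only [lead_zero, lead_one, lead_two, lead_three]
    constructor
    · rintro ⟨k3, ⟨x, k2⟩, ⟨y, z, k1⟩, p, q, r, k0⟩
      grind
    · rintro ⟨k0, k1, k2, k3, k4, k5⟩
      refine ⟨?_, ⟨-1 / c, ?_⟩, ⟨-1 / b, 0, ?_⟩,
        -1 / a, 0, 0, ?_⟩ <;> grind
  refine (good_Rs.setProd (good_Rs.setProd good_Rs)).of_leftInv (fun p => (p.1, p.2.1, p.2.2.1))
    (fun p => (p.1, p.2.1, p.2.2, p.1 * p.2.1, p.2.1 * p.2.2, p.1 * p.2.1 * p.2.2))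
    (by fun_prop) (by fun_prop) ?_ ?_ ?_
  rotate_left
  · rintro ⟨a, b, c⟩ h
    refine (key _ _ _ _ _ _).2 ?_
    simp only [Set.mem_prod, Rs, Set.mem_ofPred_eq, Prod.mk.injEq] at h ⊢
    grind
  all_goals
    rintro ⟨a, b, c, d, e, f⟩ h
    replace h := (key a b c d e f).1 h
    simp only [Set.mem_prod, Rs, Set.mem_ofPred_eq, Prod.mk.injEq] at h ⊢
    grind

theorem good_W_3201 {σ : Equiv.Perm (Fin 4)} (h0 : σ 0 = 3) (h1 : σ 1 = 2) (h2 : σ 2 = 0)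
    (h3 : σ 3 = 1) : Good ↥(W σ) := by
  have key : ∀ a b c d e f : ℝ, Lm a b c d e f ∈ Bru 4 σ ↔
      d ≠ 0 ∧ e ≠ 0 ∧ a * b * c - a * e - c * d ≠ 0 ∧ f = 0 := by
    intro a b c d e f
    rw [lm_mem_bru, h0, h1, h2, h3]
    simp only [lead_zero, lead_one, lead_two, lead_three]
    constructor
    · rintro ⟨k3, ⟨x, k2⟩, ⟨y, z, k1⟩, p, q, r, k0⟩
      grind
    · rintro ⟨k0, k1, k2, k3⟩
      refine ⟨?_, ⟨0, ?_⟩, ⟨-a / d, (a * b - d) / (d * e), ?_⟩,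
        (b * c - e) * (-1 / (a * b * c - a * e - c * d)), c / (a * b * c - a * e - c * d), -1 / (a * b * c - a * e - c * d), ?_⟩ <;> grind
  refine (good_KK).of_leftInv (fun p => (p.2.2.2.1, p.2.2.2.2.1, p.1, p.2.1, p.2.2.1))
    (fun p => (p.2.2.1, p.2.2.2.1, p.2.2.2.2, p.1, p.2.1, 0))
    (by fun_prop) (by fun_prop) ?_ ?_ ?_
  rotate_left
  · rintro ⟨d, e, a, b, c⟩ h
    refine (key _ _ _ _ _ _).2 ?_
    simp only [KK, Set.mem_ofPred_eq, Prod.mk.injEq] at h ⊢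
    grind
  all_goals
    rintro ⟨a, b, c, d, e, f⟩ h
    replace h := (key a b c d e f).1 h
    simp only [KK, Set.mem_ofPred_eq, Prod.mk.injEq] at h ⊢
    grind

theorem good_W_2301 {σ : Equiv.Perm (Fin 4)} (h0 : σ 0 = 2) (h1 : σ 1 = 3) (h2 : σ 2 = 0)
    (h3 : σ 3 = 1) : Good ↥(W σ) := by
  have key : ∀ a b c d e f : ℝ, Lm a b c d e f ∈ Bru 4 σ ↔
      d ≠ 0 ∧ e ≠ 0 ∧ d ≠ a * b ∧ c = a * e / (a * b - d) ∧ f = 0 := by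
    intro a b c d e f
    rw [lm_mem_bru, h0, h1, h2, h3]
    simp only [lead_zero, lead_one, lead_two, lead_three]
    constructor
    · rintro ⟨k3, ⟨x, k2⟩, ⟨y, z, k1⟩, p, q, r, k0⟩
      grind
    · rintro ⟨k0, k1, k2, k3, k4⟩
      refine ⟨?_, ⟨0, ?_⟩, ⟨-a / d, (a * b - d) / (d * e), ?_⟩,
        -(1 / (a * b - d)) * b, 1 / (a * b - d), 0, ?_⟩ <;> grind
  refine (good_Rs.setProd good_TT).of_leftInv (fun p => (p.2.2.2.2.1, p.2.2.2.1, p.1, p.2.1))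
    (fun p => (p.2.2.1, p.2.2.2, p.2.2.1 * p.1 / (p.2.2.1 * p.2.2.2 - p.2.1), p.2.1, p.1, 0))
    (by fun_prop) (by
      refine ContinuousOn.prodMk (by fun_prop) (ContinuousOn.prodMk (by fun_prop) (ContinuousOn.prodMk (ContinuousOn.div (by fun_prop) (by fun_prop) fun p hp => ?_) (by fun_prop)))
      simp only [Set.mem_prod, Rs, TT, Set.mem_ofPred_eq] at hp
      grind) ?_ ?_ ?_
  rotate_left
  · rintro ⟨e, d, a, b⟩ h
    refine (key _ _ _ _ _ _).2 ?_
    simp only [Set.mem_prod, Rs, TT, Set.mem_ofPred_eq, Prod.mk.injEq] at h ⊢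
    grind
  all_goals
    rintro ⟨a, b, c, d, e, f⟩ h
    replace h := (key a b c d e f).1 h
    simp only [Set.mem_prod, Rs, TT, Set.mem_ofPred_eq, Prod.mk.injEq] at h ⊢
    grind

theorem good_W_3021 {σ : Equiv.Perm (Fin 4)} (h0 : σ 0 = 3) (h1 : σ 1 = 0) (h2 : σ 2 = 2)
    (h3 : σ 3 = 1) : Good ↥(W σ) := by
  have key : ∀ a b c d e f : ℝ, Lm a b c d e f ∈ Bru 4 σ ↔
      a ≠ 0 ∧ e ≠ 0 ∧ e ≠ b * c ∧ d = 0 ∧ f = 0 := by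
    intro a b c d e f
    rw [lm_mem_bru, h0, h1, h2, h3]
    simp only [lead_zero, lead_one, lead_two, lead_three]
    constructor
    · rintro ⟨k3, ⟨x, k2⟩, ⟨y, z, k1⟩, p, q, r, k0⟩
      grind
    · rintro ⟨k0, k1, k2, k3, k4⟩
      refine ⟨?_, ⟨-b / e, ?_⟩, ⟨0, 0, ?_⟩,
        -1 / a, -c / (a * (e - b * c)), 1 / (a * (e - b * c)), ?_⟩ <;> grind
  refine (good_Rs.setProd good_TT).of_leftInv (fun p => (p.1, p.2.2.2.2.1, p.2.1, p.2.2.1))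
    (fun p => (p.1, p.2.2.1, p.2.2.2, 0, p.2.1, 0))
    (by fun_prop) (by fun_prop) ?_ ?_ ?_
  rotate_left
  · rintro ⟨a, e, b, c⟩ h
    refine (key _ _ _ _ _ _).2 ?_
    simp only [Set.mem_prod, Rs, TT, Set.mem_ofPred_eq, Prod.mk.injEq] at h ⊢
    grind
  all_goals
    rintro ⟨a, b, c, d, e, f⟩ h
    replace h := (key a b c d e f).1 h
    simp only [Set.mem_prod, Rs, TT, Set.mem_ofPred_eq, Prod.mk.injEq] at h ⊢
    grind

theorem good_W_0321 {σ : Equiv.Perm (Fin 4)} (h0 : σ 0 = 0) (h1 : σ 1 = 3) (h2 : σ 2 = 2)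
    (h3 : σ 3 = 1) : Good ↥(W σ) := by
  have key : ∀ a b c d e f : ℝ, Lm a b c d e f ∈ Bru 4 σ ↔
      e ≠ 0 ∧ e ≠ b * c ∧ a = 0 ∧ d = 0 ∧ f = 0 := by
    intro a b c d e f
    rw [lm_mem_bru, h0, h1, h2, h3]
    simp only [lead_zero, lead_one, lead_two, lead_three]
    constructor
    · rintro ⟨k3, ⟨x, k2⟩, ⟨y, z, k1⟩, p, q, r, k0⟩
      grind
    · rintro ⟨k0, k1, k2, k3, k4⟩
      refine ⟨?_, ⟨-b / e, ?_⟩, ⟨c / (e - b * c), -1 / (e - b * c), ?_⟩,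
        0, 0, 0, ?_⟩ <;> grind
  refine (good_TT).of_leftInv (fun p => (p.2.2.2.2.1, p.2.1, p.2.2.1))
    (fun p => (0, p.2.1, p.2.2, 0, p.1, 0))
    (by fun_prop) (by fun_prop) ?_ ?_ ?_
  rotate_left
  · rintro ⟨e, b, c⟩ h
    refine (key _ _ _ _ _ _).2 ?_
    simp only [TT, Set.mem_ofPred_eq, Prod.mk.injEq] at h ⊢
    grind
  all_goals
    rintro ⟨a, b, c, d, e, f⟩ h
    replace h := (key a b c d e f).1 h
    simp only [TT, Set.mem_ofPred_eq, Prod.mk.injEq] at h ⊢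
    grind

theorem good_W_2031 {σ : Equiv.Perm (Fin 4)} (h0 : σ 0 = 2) (h1 : σ 1 = 0) (h2 : σ 2 = 3)
    (h3 : σ 3 = 1) : Good ↥(W σ) := by
  have key : ∀ a b c d e f : ℝ, Lm a b c d e f ∈ Bru 4 σ ↔
      a ≠ 0 ∧ b ≠ 0 ∧ c ≠ 0 ∧ e = b * c ∧ d = 0 ∧ f = 0 := by
    intro a b c d e f
    rw [lm_mem_bru, h0, h1, h2, h3]
    simp only [lead_zero, lead_one, lead_two, lead_three]
    constructor
    · rintro ⟨k3, ⟨x, k2⟩, ⟨y, z, k1⟩, p, q, r, k0⟩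
      grind
    · rintro ⟨k0, k1, k2, k3, k4, k5⟩
      refine ⟨?_, ⟨-1 / c, ?_⟩, ⟨0, 0, ?_⟩,
        -1 / a, 1 / (a * b), 0, ?_⟩ <;> grind
  refine (good_Rs.setProd (good_Rs.setProd good_Rs)).of_leftInv (fun p => (p.1, p.2.1, p.2.2.1))
    (fun p => (p.1, p.2.1, p.2.2, 0, p.2.1 * p.2.2, 0))
    (by fun_prop) (by fun_prop) ?_ ?_ ?_
  rotate_left
  · rintro ⟨a, b, c⟩ h
    refine (key _ _ _ _ _ _).2 ?_
    simp only [Set.mem_prod, Rs, Set.mem_ofPred_eq, Prod.mk.injEq] at h ⊢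
    grind
  all_goals
    rintro ⟨a, b, c, d, e, f⟩ h
    replace h := (key a b c d e f).1 h
    simp only [Set.mem_prod, Rs, Set.mem_ofPred_eq, Prod.mk.injEq] at h ⊢
    grind

theorem good_W_0231 {σ : Equiv.Perm (Fin 4)} (h0 : σ 0 = 0) (h1 : σ 1 = 2) (h2 : σ 2 = 3)
    (h3 : σ 3 = 1) : Good ↥(W σ) := by
  have key : ∀ a b c d e f : ℝ, Lm a b c d e f ∈ Bru 4 σ ↔
      b ≠ 0 ∧ c ≠ 0 ∧ e = b * c ∧ a = 0 ∧ d = 0 ∧ f = 0 := by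
    intro a b c d e f
    rw [lm_mem_bru, h0, h1, h2, h3]
    simp only [lead_zero, lead_one, lead_two, lead_three]
    constructor
    · rintro ⟨k3, ⟨x, k2⟩, ⟨y, z, k1⟩, p, q, r, k0⟩
      grind
    · rintro ⟨k0, k1, k2, k3, k4, k5⟩
      refine ⟨?_, ⟨-1 / c, ?_⟩, ⟨-1 / b, 0, ?_⟩,
        0, 0, 0, ?_⟩ <;> grind
  refine (good_Rs.setProd good_Rs).of_leftInv (fun p => (p.2.1, p.2.2.1))
    (fun p => (0, p.1, p.2, 0, p.1 * p.2, 0))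
    (by fun_prop) (by fun_prop) ?_ ?_ ?_
  rotate_left
  · rintro ⟨b, c⟩ h
    refine (key _ _ _ _ _ _).2 ?_
    simp only [Set.mem_prod, Rs, Set.mem_ofPred_eq, Prod.mk.injEq] at h ⊢
    grind
  all_goals
    rintro ⟨a, b, c, d, e, f⟩ h
    replace h := (key a b c d e f).1 h
    simp only [Set.mem_prod, Rs, Set.mem_ofPred_eq, Prod.mk.injEq] at h ⊢
    grind

theorem good_W_3102 {σ : Equiv.Perm (Fin 4)} (h0 : σ 0 = 3) (h1 : σ 1 = 1) (h2 : σ 2 = 0)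
    (h3 : σ 3 = 2) : Good ↥(W σ) := by
  have key : ∀ a b c d e f : ℝ, Lm a b c d e f ∈ Bru 4 σ ↔
      c ≠ 0 ∧ d ≠ 0 ∧ d ≠ a * b ∧ e = 0 ∧ f = 0 := by
    intro a b c d e f
    rw [lm_mem_bru, h0, h1, h2, h3]
    simp only [lead_zero, lead_one, lead_two, lead_three]
    constructor
    · rintro ⟨k3, ⟨x, k2⟩, ⟨y, z, k1⟩, p, q, r, k0⟩
      grind
    · rintro ⟨k0, k1, k2, k3, k4⟩
      refine ⟨?_, ⟨0, ?_⟩, ⟨-a / d, 0, ?_⟩,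
        -(1 / (a * b - d)) * b, 1 / (a * b - d), -(1 / (a * b - d)) / c, ?_⟩ <;> grind
  refine (good_Rs.setProd good_TT).of_leftInv (fun p => (p.2.2.1, p.2.2.2.1, p.1, p.2.1))
    (fun p => (p.2.2.1, p.2.2.2, p.1, p.2.1, 0, 0))
    (by fun_prop) (by fun_prop) ?_ ?_ ?_
  rotate_left
  · rintro ⟨c, d, a, b⟩ h
    refine (key _ _ _ _ _ _).2 ?_
    simp only [Set.mem_prod, Rs, TT, Set.mem_ofPred_eq, Prod.mk.injEq] at h ⊢
    grind
  all_goals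
    rintro ⟨a, b, c, d, e, f⟩ h
    replace h := (key a b c d e f).1 h
    simp only [Set.mem_prod, Rs, TT, Set.mem_ofPred_eq, Prod.mk.injEq] at h ⊢
    grind

theorem good_W_1302 {σ : Equiv.Perm (Fin 4)} (h0 : σ 0 = 1) (h1 : σ 1 = 3) (h2 : σ 2 = 0)
    (h3 : σ 3 = 2) : Good ↥(W σ) := by
  have key : ∀ a b c d e f : ℝ, Lm a b c d e f ∈ Bru 4 σ ↔
      a ≠ 0 ∧ b ≠ 0 ∧ c ≠ 0 ∧ d = a * b ∧ e = 0 ∧ f = 0 := by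
    intro a b c d e f
    rw [lm_mem_bru, h0, h1, h2, h3]
    simp only [lead_zero, lead_one, lead_two, lead_three]
    constructor
    · rintro ⟨k3, ⟨x, k2⟩, ⟨y, z, k1⟩, p, q, r, k0⟩
      grind
    · rintro ⟨k0, k1, k2, k3, k4, k5⟩
      refine ⟨?_, ⟨0, ?_⟩, ⟨-1 / b, 1 / (b * c), ?_⟩,
        -1 / a, 0, 0, ?_⟩ <;> grind
  refine (good_Rs.setProd (good_Rs.setProd good_Rs)).of_leftInv (fun p => (p.1, p.2.1, p.2.2.1))
    (fun p => (p.1, p.2.1, p.2.2, p.1 * p.2.1, 0, 0))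
    (by fun_prop) (by fun_prop) ?_ ?_ ?_
  rotate_left
  · rintro ⟨a, b, c⟩ h
    refine (key _ _ _ _ _ _).2 ?_
    simp only [Set.mem_prod, Rs, Set.mem_ofPred_eq, Prod.mk.injEq] at h ⊢
    grind
  all_goals
    rintro ⟨a, b, c, d, e, f⟩ h
    replace h := (key a b c d e f).1 h
    simp only [Set.mem_prod, Rs, Set.mem_ofPred_eq, Prod.mk.injEq] at h ⊢
    grind

theorem good_W_3012 {σ : Equiv.Perm (Fin 4)} (h0 : σ 0 = 3) (h1 : σ 1 = 0) (h2 : σ 2 = 1)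
    (h3 : σ 3 = 2) : Good ↥(W σ) := by
  have key : ∀ a b c d e f : ℝ, Lm a b c d e f ∈ Bru 4 σ ↔
      a ≠ 0 ∧ b ≠ 0 ∧ c ≠ 0 ∧ d = 0 ∧ e = 0 ∧ f = 0 := by
    intro a b c d e f
    rw [lm_mem_bru, h0, h1, h2, h3]
    simp only [lead_zero, lead_one, lead_two, lead_three]
    constructor
    · rintro ⟨k3, ⟨x, k2⟩, ⟨y, z, k1⟩, p, q, r, k0⟩
      grind
    · rintro ⟨k0, k1, k2, k3, k4, k5⟩
      refine ⟨?_, ⟨0, ?_⟩, ⟨0, 0, ?_⟩,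
        -1 / a, 1 / (a * b), -1 / (a * b * c), ?_⟩ <;> grind
  refine (good_Rs.setProd (good_Rs.setProd good_Rs)).of_leftInv (fun p => (p.1, p.2.1, p.2.2.1))
    (fun p => (p.1, p.2.1, p.2.2, 0, 0, 0))
    (by fun_prop) (by fun_prop) ?_ ?_ ?_
  rotate_left
  · rintro ⟨a, b, c⟩ h
    refine (key _ _ _ _ _ _).2 ?_
    simp only [Set.mem_prod, Rs, Set.mem_ofPred_eq, Prod.mk.injEq] at h ⊢
    grind
  all_goals
    rintro ⟨a, b, c, d, e, f⟩ h
    replace h := (key a b c d e f).1 h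
    simp only [Set.mem_prod, Rs, Set.mem_ofPred_eq, Prod.mk.injEq] at h ⊢
    grind

theorem good_W_0312 {σ : Equiv.Perm (Fin 4)} (h0 : σ 0 = 0) (h1 : σ 1 = 3) (h2 : σ 2 = 1)
    (h3 : σ 3 = 2) : Good ↥(W σ) := by
  have key : ∀ a b c d e f : ℝ, Lm a b c d e f ∈ Bru 4 σ ↔
      b ≠ 0 ∧ c ≠ 0 ∧ a = 0 ∧ d = 0 ∧ e = 0 ∧ f = 0 := by
    intro a b c d e f
    rw [lm_mem_bru, h0, h1, h2, h3]
    simp only [lead_zero, lead_one, lead_two, lead_three]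
    constructor
    · rintro ⟨k3, ⟨x, k2⟩, ⟨y, z, k1⟩, p, q, r, k0⟩
      grind
    · rintro ⟨k0, k1, k2, k3, k4, k5⟩
      refine ⟨?_, ⟨0, ?_⟩, ⟨-1 / b, 1 / (b * c), ?_⟩,
        0, 0, 0, ?_⟩ <;> grind
  refine (good_Rs.setProd good_Rs).of_leftInv (fun p => (p.2.1, p.2.2.1))
    (fun p => (0, p.1, p.2, 0, 0, 0))
    (by fun_prop) (by fun_prop) ?_ ?_ ?_
  rotate_left
  · rintro ⟨b, c⟩ h
    refine (key _ _ _ _ _ _).2 ?_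
    simp only [Set.mem_prod, Rs, Set.mem_ofPred_eq, Prod.mk.injEq] at h ⊢
    grind
  all_goals
    rintro ⟨a, b, c, d, e, f⟩ h
    replace h := (key a b c d e f).1 h
    simp only [Set.mem_prod, Rs, Set.mem_ofPred_eq, Prod.mk.injEq] at h ⊢
    grind

theorem good_W_1032 {σ : Equiv.Perm (Fin 4)} (h0 : σ 0 = 1) (h1 : σ 1 = 0) (h2 : σ 2 = 3)
    (h3 : σ 3 = 2) : Good ↥(W σ) := by
  have key : ∀ a b c d e f : ℝ, Lm a b c d e f ∈ Bru 4 σ ↔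
      a ≠ 0 ∧ c ≠ 0 ∧ b = 0 ∧ d = 0 ∧ e = 0 ∧ f = 0 := by
    intro a b c d e f
    rw [lm_mem_bru, h0, h1, h2, h3]
    simp only [lead_zero, lead_one, lead_two, lead_three]
    constructor
    · rintro ⟨k3, ⟨x, k2⟩, ⟨y, z, k1⟩, p, q, r, k0⟩
      grind
    · rintro ⟨k0, k1, k2, k3, k4, k5⟩
      refine ⟨?_, ⟨-1 / c, ?_⟩, ⟨0, 0, ?_⟩,
        -1 / a, 0, 0, ?_⟩ <;> grind
  refine (good_Rs.setProd good_Rs).of_leftInv (fun p => (p.1, p.2.2.1))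
    (fun p => (p.1, 0, p.2, 0, 0, 0))
    (by fun_prop) (by fun_prop) ?_ ?_ ?_
  rotate_left
  · rintro ⟨a, c⟩ h
    refine (key _ _ _ _ _ _).2 ?_
    simp only [Set.mem_prod, Rs, Set.mem_ofPred_eq, Prod.mk.injEq] at h ⊢
    grind
  all_goals
    rintro ⟨a, b, c, d, e, f⟩ h
    replace h := (key a b c d e f).1 h
    simp only [Set.mem_prod, Rs, Set.mem_ofPred_eq, Prod.mk.injEq] at h ⊢
    grind

theorem good_W_0132 {σ : Equiv.Perm (Fin 4)} (h0 : σ 0 = 0) (h1 : σ 1 = 1) (h2 : σ 2 = 3)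
    (h3 : σ 3 = 2) : Good ↥(W σ) := by
  have key : ∀ a b c d e f : ℝ, Lm a b c d e f ∈ Bru 4 σ ↔
      c ≠ 0 ∧ a = 0 ∧ b = 0 ∧ d = 0 ∧ e = 0 ∧ f = 0 := by
    intro a b c d e f
    rw [lm_mem_bru, h0, h1, h2, h3]
    simp only [lead_zero, lead_one, lead_two, lead_three]
    constructor
    · rintro ⟨k3, ⟨x, k2⟩, ⟨y, z, k1⟩, p, q, r, k0⟩
      grind
    · rintro ⟨k0, k1, k2, k3, k4, k5⟩
      refine ⟨?_, ⟨-1 / c, ?_⟩, ⟨0, 0, ?_⟩,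
        0, 0, 0, ?_⟩ <;> grind
  refine (good_Rs).of_leftInv (fun p => p.2.2.1)
    (fun p => (0, 0, p, 0, 0, 0))
    (by fun_prop) (by fun_prop) ?_ ?_ ?_
  rotate_left
  · rintro c h
    refine (key _ _ _ _ _ _).2 ?_
    simp only [Rs, Set.mem_ofPred_eq, Prod.mk.injEq] at h ⊢
    grind
  all_goals
    rintro ⟨a, b, c, d, e, f⟩ h
    replace h := (key a b c d e f).1 h
    simp only [Rs, Set.mem_ofPred_eq, Prod.mk.injEq] at h ⊢
    grind

theorem good_W_2103 {σ : Equiv.Perm (Fin 4)} (h0 : σ 0 = 2) (h1 : σ 1 = 1) (h2 : σ 2 = 0)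
    (h3 : σ 3 = 3) : Good ↥(W σ) := by
  have key : ∀ a b c d e f : ℝ, Lm a b c d e f ∈ Bru 4 σ ↔
      d ≠ 0 ∧ d ≠ a * b ∧ c = 0 ∧ e = 0 ∧ f = 0 := by
    intro a b c d e f
    rw [lm_mem_bru, h0, h1, h2, h3]
    simp only [lead_zero, lead_one, lead_two, lead_three]
    constructor
    · rintro ⟨k3, ⟨x, k2⟩, ⟨y, z, k1⟩, p, q, r, k0⟩
      grind
    · rintro ⟨k0, k1, k2, k3, k4⟩
      refine ⟨?_, ⟨0, ?_⟩, ⟨-a / d, 0, ?_⟩,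
        -(1 / (a * b - d)) * b, 1 / (a * b - d), 0, ?_⟩ <;> grind
  refine (good_TT).of_leftInv (fun p => (p.2.2.2.1, p.1, p.2.1))
    (fun p => (p.2.1, p.2.2, 0, p.1, 0, 0))
    (by fun_prop) (by fun_prop) ?_ ?_ ?_
  rotate_left
  · rintro ⟨d, a, b⟩ h
    refine (key _ _ _ _ _ _).2 ?_
    simp only [TT, Set.mem_ofPred_eq, Prod.mk.injEq] at h ⊢
    grind
  all_goals
    rintro ⟨a, b, c, d, e, f⟩ h
    replace h := (key a b c d e f).1 h
    simp only [TT, Set.mem_ofPred_eq, Prod.mk.injEq] at h ⊢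
    grind

theorem good_W_1203 {σ : Equiv.Perm (Fin 4)} (h0 : σ 0 = 1) (h1 : σ 1 = 2) (h2 : σ 2 = 0)
    (h3 : σ 3 = 3) : Good ↥(W σ) := by
  have key : ∀ a b c d e f : ℝ, Lm a b c d e f ∈ Bru 4 σ ↔
      a ≠ 0 ∧ b ≠ 0 ∧ d = a * b ∧ c = 0 ∧ e = 0 ∧ f = 0 := by
    intro a b c d e f
    rw [lm_mem_bru, h0, h1, h2, h3]
    simp only [lead_zero, lead_one, lead_two, lead_three]
    constructor
    · rintro ⟨k3, ⟨x, k2⟩, ⟨y, z, k1⟩, p, q, r, k0⟩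
      grind
    · rintro ⟨k0, k1, k2, k3, k4, k5⟩
      refine ⟨?_, ⟨0, ?_⟩, ⟨-1 / b, 0, ?_⟩,
        -1 / a, 0, 0, ?_⟩ <;> grind
  refine (good_Rs.setProd good_Rs).of_leftInv (fun p => (p.1, p.2.1))
    (fun p => (p.1, p.2, 0, p.1 * p.2, 0, 0))
    (by fun_prop) (by fun_prop) ?_ ?_ ?_
  rotate_left
  · rintro ⟨a, b⟩ h
    refine (key _ _ _ _ _ _).2 ?_
    simp only [Set.mem_prod, Rs, Set.mem_ofPred_eq, Prod.mk.injEq] at h ⊢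
    grind
  all_goals
    rintro ⟨a, b, c, d, e, f⟩ h
    replace h := (key a b c d e f).1 h
    simp only [Set.mem_prod, Rs, Set.mem_ofPred_eq, Prod.mk.injEq] at h ⊢
    grind

theorem good_W_2013 {σ : Equiv.Perm (Fin 4)} (h0 : σ 0 = 2) (h1 : σ 1 = 0) (h2 : σ 2 = 1)
    (h3 : σ 3 = 3) : Good ↥(W σ) := by
  have key : ∀ a b c d e f : ℝ, Lm a b c d e f ∈ Bru 4 σ ↔
      a ≠ 0 ∧ b ≠ 0 ∧ c = 0 ∧ d = 0 ∧ e = 0 ∧ f = 0 := by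
    intro a b c d e f
    rw [lm_mem_bru, h0, h1, h2, h3]
    simp only [lead_zero, lead_one, lead_two, lead_three]
    constructor
    · rintro ⟨k3, ⟨x, k2⟩, ⟨y, z, k1⟩, p, q, r, k0⟩
      grind
    · rintro ⟨k0, k1, k2, k3, k4, k5⟩
      refine ⟨?_, ⟨0, ?_⟩, ⟨0, 0, ?_⟩,
        -1 / a, 1 / (a * b), 0, ?_⟩ <;> grind
  refine (good_Rs.setProd good_Rs).of_leftInv (fun p => (p.1, p.2.1))
    (fun p => (p.1, p.2, 0, 0, 0, 0))
    (by fun_prop) (by fun_prop) ?_ ?_ ?_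
  rotate_left
  · rintro ⟨a, b⟩ h
    refine (key _ _ _ _ _ _).2 ?_
    simp only [Set.mem_prod, Rs, Set.mem_ofPred_eq, Prod.mk.injEq] at h ⊢
    grind
  all_goals
    rintro ⟨a, b, c, d, e, f⟩ h
    replace h := (key a b c d e f).1 h
    simp only [Set.mem_prod, Rs, Set.mem_ofPred_eq, Prod.mk.injEq] at h ⊢
    grind

theorem good_W_0213 {σ : Equiv.Perm (Fin 4)} (h0 : σ 0 = 0) (h1 : σ 1 = 2) (h2 : σ 2 = 1)
    (h3 : σ 3 = 3) : Good ↥(W σ) := by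
  have key : ∀ a b c d e f : ℝ, Lm a b c d e f ∈ Bru 4 σ ↔
      b ≠ 0 ∧ a = 0 ∧ c = 0 ∧ d = 0 ∧ e = 0 ∧ f = 0 := by
    intro a b c d e f
    rw [lm_mem_bru, h0, h1, h2, h3]
    simp only [lead_zero, lead_one, lead_two, lead_three]
    constructor
    · rintro ⟨k3, ⟨x, k2⟩, ⟨y, z, k1⟩, p, q, r, k0⟩
      grind
    · rintro ⟨k0, k1, k2, k3, k4, k5⟩
      refine ⟨?_, ⟨0, ?_⟩, ⟨-1 / b, 0, ?_⟩,
        0, 0, 0, ?_⟩ <;> grind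
  refine (good_Rs).of_leftInv (fun p => p.2.1)
    (fun p => (0, p, 0, 0, 0, 0))
    (by fun_prop) (by fun_prop) ?_ ?_ ?_
  rotate_left
  · rintro b h
    refine (key _ _ _ _ _ _).2 ?_
    simp only [Rs, Set.mem_ofPred_eq, Prod.mk.injEq] at h ⊢
    grind
  all_goals
    rintro ⟨a, b, c, d, e, f⟩ h
    replace h := (key a b c d e f).1 h
    simp only [Rs, Set.mem_ofPred_eq, Prod.mk.injEq] at h ⊢
    grind

theorem good_W_1023 {σ : Equiv.Perm (Fin 4)} (h0 : σ 0 = 1) (h1 : σ 1 = 0) (h2 : σ 2 = 2)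
    (h3 : σ 3 = 3) : Good ↥(W σ) := by
  have key : ∀ a b c d e f : ℝ, Lm a b c d e f ∈ Bru 4 σ ↔
      a ≠ 0 ∧ b = 0 ∧ c = 0 ∧ d = 0 ∧ e = 0 ∧ f = 0 := by
    intro a b c d e f
    rw [lm_mem_bru, h0, h1, h2, h3]
    simp only [lead_zero, lead_one, lead_two, lead_three]
    constructor
    · rintro ⟨k3, ⟨x, k2⟩, ⟨y, z, k1⟩, p, q, r, k0⟩
      grind
    · rintro ⟨k0, k1, k2, k3, k4, k5⟩
      refine ⟨?_, ⟨0, ?_⟩, ⟨0, 0, ?_⟩,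
        -1 / a, 0, 0, ?_⟩ <;> grind
  refine (good_Rs).of_leftInv (fun p => p.1)
    (fun p => (p, 0, 0, 0, 0, 0))
    (by fun_prop) (by fun_prop) ?_ ?_ ?_
  rotate_left
  · rintro a h
    refine (key _ _ _ _ _ _).2 ?_
    simp only [Rs, Set.mem_ofPred_eq, Prod.mk.injEq] at h ⊢
    grind
  all_goals
    rintro ⟨a, b, c, d, e, f⟩ h
    replace h := (key a b c d e f).1 h
    simp only [Rs, Set.mem_ofPred_eq, Prod.mk.injEq] at h ⊢
    grind

theorem good_W_0123 {σ : Equiv.Perm (Fin 4)} (h0 : σ 0 = 0) (h1 : σ 1 = 1) (h2 : σ 2 = 2)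
    (h3 : σ 3 = 3) : Good ↥(W σ) := by
  have key : ∀ a b c d e f : ℝ, Lm a b c d e f ∈ Bru 4 σ ↔
      a = 0 ∧ b = 0 ∧ c = 0 ∧ d = 0 ∧ e = 0 ∧ f = 0 := by
    intro a b c d e f
    rw [lm_mem_bru, h0, h1, h2, h3]
    simp only [lead_zero, lead_one, lead_two, lead_three]
    constructor
    · rintro ⟨k3, ⟨x, k2⟩, ⟨y, z, k1⟩, p, q, r, k0⟩
      grind
    · rintro ⟨k0, k1, k2, k3, k4, k5⟩
      refine ⟨?_, ⟨0, ?_⟩, ⟨0, 0, ?_⟩,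
        0, 0, 0, ?_⟩ <;> grind
  refine (good_univ (E := ℝ)).of_leftInv (fun p => p.1)
    (fun p => (0, 0, 0, 0, 0, 0))
    (by fun_prop) (by fun_prop) ?_ ?_ ?_
  rotate_left
  · rintro a h
    refine (key _ _ _ _ _ _).2 ?_
    simp only [Set.mem_ofPred_eq, Prod.mk.injEq] at h ⊢
    grind
  all_goals
    rintro ⟨a, b, c, d, e, f⟩ h
    replace h := (key a b c d e f).1 h
    simp only [Set.mem_ofPred_eq, Prod.mk.injEq] at h ⊢
    grind

end Cells

theorem good_W (σ : Equiv.Perm (Fin 4)) : Good ↥(W σ) := by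
  have i01 : σ 0 ≠ σ 1 := fun h => by simpa using σ.injective h
  have i02 : σ 0 ≠ σ 2 := fun h => by simpa using σ.injective h
  have i03 : σ 0 ≠ σ 3 := fun h => by simpa using σ.injective h
  have i12 : σ 1 ≠ σ 2 := fun h => by simpa using σ.injective h
  have i13 : σ 1 ≠ σ 3 := fun h => by simpa using σ.injective h
  have i23 : σ 2 ≠ σ 3 := fun h => by simpa using σ.injective h
  have fin4 : ∀ x : Fin 4, x = 0 ∨ x = 1 ∨ x = 2 ∨ x = 3 := by decide
  rcases fin4 (σ 0) with h0 | h0 | h0 | h0 <;> rcases fin4 (σ 1) with h1 | h1 | h1 | h1 <;>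
    first
    | exact absurd (h0.trans h1.symm) i01
    | rcases fin4 (σ 2) with h2 | h2 | h2 | h2 <;>
      first
      | exact absurd (h0.trans h2.symm) i02
      | exact absurd (h1.trans h2.symm) i12
      | rcases fin4 (σ 3) with h3 | h3 | h3 | h3 <;>
        first
        | exact absurd (h0.trans h3.symm) i03
        | exact absurd (h1.trans h3.symm) i13
        | exact absurd (h2.trans h3.symm) i23
        | exact good_W_0123 h0 h1 h2 h3
        | exact good_W_0132 h0 h1 h2 h3
        | exact good_W_0213 h0 h1 h2 h3
        | exact good_W_0231 h0 h1 h2 h3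
        | exact good_W_0312 h0 h1 h2 h3
        | exact good_W_0321 h0 h1 h2 h3
        | exact good_W_1023 h0 h1 h2 h3
        | exact good_W_1032 h0 h1 h2 h3
        | exact good_W_1203 h0 h1 h2 h3
        | exact good_W_1230 h0 h1 h2 h3
        | exact good_W_1302 h0 h1 h2 h3
        | exact good_W_1320 h0 h1 h2 h3
        | exact good_W_2013 h0 h1 h2 h3
        | exact good_W_2031 h0 h1 h2 h3
        | exact good_W_2103 h0 h1 h2 h3
        | exact good_W_2130 h0 h1 h2 h3
        | exact good_W_2301 h0 h1 h2 h3
        | exact good_W_2310 h0 h1 h2 h3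
        | exact good_W_3012 h0 h1 h2 h3
        | exact good_W_3021 h0 h1 h2 h3
        | exact good_W_3102 h0 h1 h2 h3
        | exact good_W_3120 h0 h1 h2 h3
        | exact good_W_3201 h0 h1 h2 h3
        | exact good_W_3210 h0 h1 h2 h3

/-- for every permutation `σ ∈ S₄`, every connected component of
`BL_σ ⊂ Lo¹₄` is contractible. -/
theorem stmt4 (σ : Equiv.Perm (Fin 4)) :
    ∀ L : ↥(BL 4 σ), ContractibleSpace ↥(connectedComponent L) := by
  intro L
  exact (good_BL_of_good_W (good_W σ)).contractible_component L
end
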